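/- For ν > −1 define the generalized Laguerre polynomials L_n^ν(x) := Σ_{k=0}^{n} (−1)^k · (Γ(n+ν+1)/(Γ(k+ν+1)·(n−k)!·k!)) · x^k, where Γ is the Gamma function. For an integer dimension d ≥ 1, set ν = d/2 − 1 and define the radial Laguerre functions Φ_n(r) := L_n^{d/2−1}(2πr²)·e^{−πr²} for r > 0. Let r₁, r₂ > 0 be radii with q·r₁ = p·r₂ for coprime positive integers p, q. Then L := lim_{N→∞} (1/N)·#{0 ≤ n < N : sgn(Φ_n(r₁)) = sgn(Φ_n(r₂))} exists, and: L = 1/2 if p or q is even, or if p and q are odd and (p−q)(d−1)/2 is odd; otherwise (i.e., p, q both odd and (p−q)(d−1)/2 even, so that (p−q)(d−1)/4 is an integer), L = 1/2 − (1/(2pq))·(−1)^{(p+q)/2 + (p−q)(d−1)/4}. -/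

import Mathlib

open Filter Real MeasureTheory
open scoped Classical

noncomputable def sgn (t : ℝ) : ℝ := if 0 < t then 1 else if t < 0 then -1 else 0

/-- Generalized Laguerre polynomial `L_n^ν(x) = ∑_{k=0}^n (-1)^k Γ(n+ν+1)/(Γ(k+ν+1)(n-k)!k!) x^k`. -/
noncomputable def Lag (ν : ℝ) (n : ℕ) (x : ℝ) : ℝ :=
  ∑ k ∈ Finset.range (n + 1),
    (-1 : ℝ) ^ k *
      (Real.Gamma ((n : ℝ) + ν + 1) /
        (Real.Gamma ((k : ℝ) + ν + 1) * (Nat.factorial (n - k)) * (Nat.factorial k))) * x ^ k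

/-- Radial Laguerre function in dimension `d`: `Φ_n(r) = L_n^{d/2-1}(2πr²) e^{-πr²}`. -/
noncomputable def LagFun (d : ℕ) (n : ℕ) (r : ℝ) : ℝ :=
  Lag ((d : ℝ) / 2 - 1) n (2 * π * r ^ 2) * Real.exp (-π * r ^ 2)

/-!
For order `-1/2` the functions `L_n(y²) e^{-y²/2}` are the even Hermite functions. They solve
`h'' = (y² - l²) h` with `l ~ 2 √n`, so by variation of constants they equal `cos (l y) + O(1 / l)`
uniformly on compact sets, up to normalization; the odd ones likewise give `sin (l y) / l`.
Averaging over `y = r sin θ` raises the order to `0`, and the stationary point `θ = π / 2`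
contributes the phase `π / 4`. The contiguous relations then raise the order in unit steps, each
shifting the phase by `π / 2`. Hence, up to positive factors, `Φ_n(r)` behaves like
`cos (2 √(2 π n) r - (d - 1) π / 4)` in every dimension `d`.

The averages over `n < N` of a continuous periodic function of `c √n` tend to its mean. As
`r₁ : r₂ = p : q`, the density is the proportion of `x` modulo `1` for which `cos (2 π p x - a)` and
`cos (2 π q x - a)`, `a = (d - 1) π / 4`, have the same sign. It equals `(1 + I) / 2`, where `I` is
the mean of a product of two square waves of frequencies `p` and `q`. Averaging one of them over the
shifts by `j / p` collapses it, by Hermite's identity for the floor function, to `0` when `p` is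
even and to `1 / p` times a square wave when `p` is odd. Therefore `I` vanishes when `p` or `q` is
even, and is `1 / (p q)` times a value of the autocorrelation of the square wave when both are odd.
-/

/-! ### Laguerre polynomials -/

/-- The coefficient of `x ^ k` in `Lag ν n x`, written with a binomial coefficient so that it
vanishes for `k > n`. -/
noncomputable def lagCoeff (ν : ℝ) (n k : ℕ) : ℝ :=
  (-1) ^ k * (Gamma (n + ν + 1) / n.factorial * n.choose k / Gamma (k + ν + 1))

theorem lag_eq_sum_lagCoeff (ν : ℝ) {n M : ℕ} (h : n < M) (x : ℝ) :
    Lag ν n x = ∑ k ∈ Finset.range M, lagCoeff ν n k * x ^ k := by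
  rw [Lag]
  refine Finset.sum_subset_zero_on_sdiff (Finset.range_mono h) (fun k hk => ?_) fun k hk => ?_
  · have : n < k := by simpa using (Finset.mem_sdiff.1 hk).2
    simp [lagCoeff, Nat.choose_eq_zero_of_lt this]
  · have hkn : k ≤ n := Nat.lt_succ_iff.1 (Finset.mem_range.1 hk)
    rw [lagCoeff, Nat.cast_choose ℝ hkn]
    field_simp

theorem natCast_add_add_one_pos {ν : ℝ} (hν : -1 < ν) (k : ℕ) : 0 < (k : ℝ) + ν + 1 := by
  linarith [k.cast_nonneg (α := ℝ)]

theorem Gamma_natCast_add_succ {ν : ℝ} (hν : -1 < ν) (k : ℕ) :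
    Gamma (k + (ν + 1) + 1) = (k + ν + 1) * Gamma (k + ν + 1) := by
  rw [← Gamma_add_one (natCast_add_add_one_pos hν k).ne', ← add_assoc (k : ℝ)]

theorem Gamma_natCast_succ_add {ν : ℝ} (hν : -1 < ν) (k : ℕ) :
    Gamma ((k + 1 : ℕ) + ν + 1) = (k + ν + 1) * Gamma (k + ν + 1) := by
  rw [← Gamma_natCast_add_succ hν, Nat.cast_succ, add_assoc (k : ℝ), add_comm 1 ν]

theorem lagCoeff_succ {ν : ℝ} (hν : -1 < ν) (n k : ℕ) :
    lagCoeff ν (n + 1) k = lagCoeff (ν + 1) (n + 1) k - lagCoeff (ν + 1) n k := by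
  have hk := natCast_add_add_one_pos hν k
  have := Gamma_pos_of_pos hk
  have hchoose : ((n : ℝ) + 1) * n.choose k = (n + 1 - k) * (n + 1).choose k := by
    rcases le_or_gt k (n + 1) with h | h
    · rw [← Nat.cast_succ, ← Nat.cast_sub h]
      exact_mod_cast by linarith [Nat.choose_mul_succ_eq n k]
    · simp [Nat.choose_eq_zero_of_lt h, Nat.choose_eq_zero_of_lt (n.lt_succ_self.trans h)]
  simp only [lagCoeff, Gamma_natCast_add_succ hν, Gamma_natCast_succ_add hν, Nat.factorial_succ]
  push_cast
  field_simp
  linear_combination (n + ν + 1) * Gamma (n + ν + 1) * hchoose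

theorem lagCoeff_add_one_zero {ν : ℝ} (hν : -1 < ν) (n : ℕ) :
    (n + ν + 1) * lagCoeff ν n 0 = (n + 1) * lagCoeff ν (n + 1) 0 := by
  simp only [lagCoeff, Gamma_natCast_succ_add hν, Nat.factorial_succ, Nat.choose_zero_right]
  push_cast
  field_simp

theorem lagCoeff_add_one_succ {ν : ℝ} (hν : -1 < ν) (n k : ℕ) :
    lagCoeff (ν + 1) n k =
      (n + ν + 1) * lagCoeff ν n (k + 1) - (n + 1) * lagCoeff ν (n + 1) (k + 1) := by
  have hk := natCast_add_add_one_pos hν k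
  have := Gamma_pos_of_pos hk
  simp only [lagCoeff, Gamma_natCast_add_succ hν, Gamma_natCast_succ_add hν, Nat.factorial_succ,
    Nat.choose_succ_succ, pow_succ]
  push_cast
  field_simp
  ring

theorem succ_mul_lagCoeff_succ (ν : ℝ) (n k : ℕ) :
    (k + 1) * lagCoeff ν (n + 1) (k + 1) = -lagCoeff (ν + 1) n k := by
  have hshift (j : ℕ) : Gamma ((j + 1 : ℕ) + ν + 1) = Gamma (j + (ν + 1) + 1) := by
    push_cast
    ring_nf
  have hchoose : ((k : ℝ) + 1) * (n + 1).choose (k + 1) = (n + 1) * n.choose k := by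
    exact_mod_cast by linarith [Nat.add_one_mul_choose_eq n k]
  simp only [lagCoeff, hshift, Nat.factorial_succ, pow_succ]
  push_cast
  field_simp
  linear_combination -(Gamma (n + (ν + 1) + 1) / Gamma (k + (ν + 1) + 1)) * hchoose

theorem add_mul_lagCoeff_add_one {ν : ℝ} (hν : -1 < ν) (n k : ℕ) :
    (k + ν + 1) * lagCoeff (ν + 1) n k = (n + ν + 1) * lagCoeff ν n k := by
  have hk := natCast_add_add_one_pos hν k
  simp only [lagCoeff, Gamma_natCast_add_succ hν]
  field_simp

theorem lag_succ {ν : ℝ} (hν : -1 < ν) (n : ℕ) (x : ℝ) :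
    Lag ν (n + 1) x = Lag (ν + 1) (n + 1) x - Lag (ν + 1) n x := by
  rw [lag_eq_sum_lagCoeff ν (n + 1).lt_succ_self, lag_eq_sum_lagCoeff (ν + 1) (n + 1).lt_succ_self,
    lag_eq_sum_lagCoeff (ν + 1) (show n < (n + 1).succ by omega), ← Finset.sum_sub_distrib]
  simp only [lagCoeff_succ hν, sub_mul]

theorem mul_lag_add_one {ν : ℝ} (hν : -1 < ν) (n : ℕ) (x : ℝ) :
    x * Lag (ν + 1) n x = (n + ν + 1) * Lag ν n x - (n + 1) * Lag ν (n + 1) x := by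
  rw [lag_eq_sum_lagCoeff (ν + 1) (n.lt_succ_self), lag_eq_sum_lagCoeff ν (n + 1).lt_succ_self,
    lag_eq_sum_lagCoeff ν (show n < (n + 1).succ by omega), Finset.sum_range_succ' _ (n + 1),
    Finset.sum_range_succ' _ (n + 1)]
  simp only [lagCoeff_add_one_succ hν, mul_add, Finset.mul_sum]
  rw [add_sub_add_comm, ← Finset.sum_sub_distrib, ← mul_assoc, ← mul_assoc,
    lagCoeff_add_one_zero hν, sub_self, add_zero]
  exact Finset.sum_congr rfl fun k _ => by ring

theorem mul_lag_add_two {ν : ℝ} (hν : -1 < ν) (n : ℕ) (x : ℝ) :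
    x * Lag (ν + 1 + 1) n x =
      (ν + 1 - x) * Lag (ν + 1) (n + 1) x - (n + 2) * Lag ν (n + 2) x := by
  have hlower := mul_lag_add_one (hν.trans (lt_add_one ν)) n x
  have hraise := mul_lag_add_one hν (n + 1) x
  push_cast at hraise
  linear_combination hlower + hraise + (n + ν + 2) * lag_succ hν n x

theorem hasDerivAt_lag_succ (ν : ℝ) (n : ℕ) (x : ℝ) :
    HasDerivAt (Lag ν (n + 1)) (-Lag (ν + 1) n x) x := by
  have hderiv : HasDerivAt (fun x => ∑ k ∈ Finset.range (n + 2), lagCoeff ν (n + 1) k * x ^ k)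
      (∑ k ∈ Finset.range (n + 2), lagCoeff ν (n + 1) k * (k * x ^ (k - 1))) x :=
    HasDerivAt.fun_sum fun k _ => (hasDerivAt_pow k x).const_mul _
  convert hderiv using 1
  · exact funext (lag_eq_sum_lagCoeff ν (n + 1).lt_succ_self)
  · rw [Finset.sum_range_succ', lag_eq_sum_lagCoeff (ν + 1) n.lt_succ_self]
    simp [← Finset.sum_neg_distrib, ← neg_mul, ← succ_mul_lagCoeff_succ, mul_assoc,
      mul_left_comm]

theorem differentiable_lag (ν : ℝ) (n : ℕ) : Differentiable ℝ (Lag ν n) := by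
  unfold Lag
  fun_prop

theorem mul_deriv_lag_add_one {ν : ℝ} (hν : -1 < ν) (n : ℕ) (x : ℝ) :
    x * deriv (Lag (ν + 1) n) x = (n + ν + 1) * Lag ν n x - (ν + 1) * Lag (ν + 1) n x := by
  have hderiv : HasDerivAt (Lag (ν + 1) n)
      (∑ k ∈ Finset.range (n + 1), lagCoeff (ν + 1) n k * (k * x ^ (k - 1))) x := by
    rw [funext (lag_eq_sum_lagCoeff (ν + 1) n.lt_succ_self)]
    exact HasDerivAt.fun_sum fun k _ => (hasDerivAt_pow k x).const_mul _
  rw [hderiv.deriv, lag_eq_sum_lagCoeff _ n.lt_succ_self, lag_eq_sum_lagCoeff _ n.lt_succ_self,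
    Finset.mul_sum, Finset.mul_sum, Finset.mul_sum, ← Finset.sum_sub_distrib]
  refine Finset.sum_congr rfl fun k _ => ?_
  have hpow : x * (k * x ^ (k - 1)) = k * x ^ k := by
    cases k <;> simp [pow_succ]; ring
  linear_combination lagCoeff (ν + 1) n k * hpow + x ^ k * add_mul_lagCoeff_add_one hν n k

theorem lag_zero_arg (ν : ℝ) (n : ℕ) :
    Lag ν n 0 = Gamma (n + ν + 1) / (n.factorial * Gamma (ν + 1)) := by
  rw [lag_eq_sum_lagCoeff ν n.lt_succ_self, Finset.sum_range_succ']
  simp [lagCoeff, div_div]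

theorem lag_zero_arg_pos {ν : ℝ} (hν : -1 < ν) (n : ℕ) : 0 < Lag ν n 0 := by
  have hn := Gamma_pos_of_pos (natCast_add_add_one_pos hν n)
  have h0 := Gamma_pos_of_pos (show 0 < ν + 1 by linarith)
  rw [lag_zero_arg]
  positivity

/-! ### Hermite functions -/

theorem abs_mul_add_mul_le {a b s c E : ℝ} (ha : |a| ≤ E) (hb : |b| ≤ E) (hs : |s| ≤ 1)
    (hc : |c| ≤ 1) : |a * c + b * s| ≤ 2 * E :=
  calc |a * c + b * s| ≤ |a| * |c| + |b| * |s| := by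
        simpa only [abs_mul] using abs_add_le (a * c) (b * s)
    _ ≤ |a| + |b| := add_le_add (mul_le_of_le_one_right (abs_nonneg a) hc)
        (mul_le_of_le_one_right (abs_nonneg b) hs)
    _ ≤ 2 * E := by linarith

section Oscillator

variable {h h' : ℝ → ℝ} {l : ℝ}

theorem abs_le_two_of_hasDerivAt (hl : 0 < l) (hh : ∀ y, HasDerivAt h (h' y) y)
    (hh' : ∀ y, HasDerivAt h' ((y ^ 2 - l ^ 2) * h y) y) (h0 : h 0 = 1) (h0' : h' 0 = 0)
    {y : ℝ} (hy : 0 ≤ y) (hyl : 2 * y ^ 2 ≤ l ^ 2) : |h y| ≤ 2 := by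
  have henergy (t : ℝ) :
      HasDerivAt (fun t => h' t ^ 2 + (l ^ 2 - t ^ 2) * h t ^ 2) (-(2 * t * h t ^ 2)) t := by
    refine (((hh' t).fun_pow 2).add
      (((hasDerivAt_pow 2 t).const_sub (l ^ 2)).fun_mul ((hh t).fun_pow 2))).congr_deriv ?_
    push_cast
    ring
  have hanti : AntitoneOn (fun t => h' t ^ 2 + (l ^ 2 - t ^ 2) * h t ^ 2) (Set.Ici 0) := by
    refine antitoneOn_of_hasDerivWithinAt_nonpos (convex_Ici 0)
      (fun t _ => (henergy t).continuousAt.continuousWithinAt)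
      (fun t _ => (henergy t).hasDerivWithinAt) fun t ht => ?_
    have : 0 < t := by simpa using ht
    exact neg_nonpos.2 (by positivity)
  have hle : h' y ^ 2 + (l ^ 2 - y ^ 2) * h y ^ 2 ≤ l ^ 2 := by
    simpa [h0, h0'] using hanti Set.self_mem_Ici hy hy
  have hl2 : 0 < l ^ 2 := by positivity
  refine abs_le_of_sq_le_sq (le_of_mul_le_mul_left ?_ hl2) zero_le_two
  nlinarith [sq_nonneg (h' y), mul_nonneg (sub_nonneg.2 hyl) (sq_nonneg (h y))]

/-
Variation of constants: `h cos - (h' / l) sin` and `h sin + (h' / l) cos` would be constant if `g`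
vanished.
-/
theorem abs_sub_cos_le_of_forced {g : ℝ → ℝ} {M R : ℝ} (hl : 0 < l)
    (hh : ∀ y, HasDerivAt h (h' y) y) (hh' : ∀ y, HasDerivAt h' (g y - l ^ 2 * h y) y)
    (h0 : h 0 = 1) (h0' : h' 0 = 0) (hg : ∀ y ∈ Set.Icc 0 R, |g y| ≤ M)
    {y : ℝ} (hy : y ∈ Set.Icc 0 R) :
    |h y - cos (l * y)| ≤ 2 * (M / l * y) ∧ |h' y / l + sin (l * y)| ≤ 2 * (M / l * y) := by
  have hsin (t : ℝ) : HasDerivAt (fun t => sin (l * t)) (cos (l * t) * l) t := by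
    simpa using ((hasDerivAt_id t).const_mul l).sin
  have hcos (t : ℝ) : HasDerivAt (fun t => cos (l * t)) (-sin (l * t) * l) t := by
    simpa using ((hasDerivAt_id t).const_mul l).cos
  have hA (t : ℝ) : HasDerivAt (fun t => h t * cos (l * t) - h' t / l * sin (l * t))
      (-(g t / l * sin (l * t))) t := by
    refine (((hh t).fun_mul (hcos t)).sub (((hh' t).div_const l).fun_mul (hsin t))).congr_deriv ?_
    field_simp
    ring
  have hB (t : ℝ) : HasDerivAt (fun t => h t * sin (l * t) + h' t / l * cos (l * t))
      (g t / l * cos (l * t)) t := by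
    refine (((hh t).fun_mul (hsin t)).add (((hh' t).div_const l).fun_mul (hcos t))).congr_deriv ?_
    field_simp
    ring
  have hbound {t c : ℝ} (ht : t ∈ Set.Ico 0 y) (hc : |c| ≤ 1) : |g t / l * c| ≤ M / l := by
    have hgt := hg t ⟨ht.1, (ht.2.trans_le hy.2).le⟩
    rw [abs_mul, abs_div, abs_of_pos hl]
    calc |g t| / l * |c| ≤ |g t| / l := mul_le_of_le_one_right (by positivity) hc
      _ ≤ M / l := by gcongr
  have hA' : |h y * cos (l * y) - h' y / l * sin (l * y) - 1| ≤ M / l * y := by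
    simpa [h0] using norm_image_sub_le_of_norm_deriv_le_segment'
      (fun t _ => (hA t).hasDerivWithinAt)
      (fun t ht => (norm_neg _).trans_le (hbound ht (abs_sin_le_one _))) y ⟨hy.1, le_rfl⟩
  have hB' : |h y * sin (l * y) + h' y / l * cos (l * y)| ≤ M / l * y := by
    simpa [h0'] using norm_image_sub_le_of_norm_deriv_le_segment'
      (fun t _ => (hB t).hasDerivWithinAt)
      (fun t ht => hbound ht (abs_cos_le_one _)) y ⟨hy.1, le_rfl⟩
  constructor
  · convert abs_mul_add_mul_le hA' hB' (abs_sin_le_one (l * y)) (abs_cos_le_one (l * y)) using 2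
    linear_combination -h y * sin_sq_add_cos_sq (l * y)
  · convert abs_mul_add_mul_le ((abs_neg _).trans_le hA') hB' (abs_cos_le_one (l * y))
      (abs_sin_le_one (l * y)) using 2
    linear_combination -(h' y / l) * sin_sq_add_cos_sq (l * y)

theorem abs_sub_cos_le_of_hasDerivAt {R : ℝ} (hl : 0 < l) (hh : ∀ y, HasDerivAt h (h' y) y)
    (hh' : ∀ y, HasDerivAt h' ((y ^ 2 - l ^ 2) * h y) y) (h0 : h 0 = 1) (h0' : h' 0 = 0)
    (hRl : 2 * R ^ 2 ≤ l ^ 2) {y : ℝ} (hy : y ∈ Set.Icc 0 R) :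
    |h y - cos (l * y)| ≤ 4 * R ^ 3 / l ∧ |h' y / l + sin (l * y)| ≤ 4 * R ^ 3 / l := by
  have hforce (t : ℝ) (ht : t ∈ Set.Icc 0 R) : |t ^ 2 * h t| ≤ R ^ 2 * 2 := by
    have ht2 : t ^ 2 ≤ R ^ 2 := pow_le_pow_left₀ ht.1 ht.2 2
    rw [abs_mul, abs_of_nonneg (sq_nonneg t)]
    gcongr
    exact abs_le_two_of_hasDerivAt hl hh hh' h0 h0' ht.1 (by linarith)
  have hduhamel := abs_sub_cos_le_of_forced hl hh
    (fun t => (hh' t).congr_deriv (sub_mul _ _ _)) h0 h0' hforce hy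
  have hle : 2 * (R ^ 2 * 2 / l * y) ≤ 4 * R ^ 3 / l :=
    calc 2 * (R ^ 2 * 2 / l * y) ≤ 2 * (R ^ 2 * 2 / l * R) := by gcongr; exact hy.2
      _ = 4 * R ^ 3 / l := by ring
  exact ⟨hduhamel.1.trans hle, hduhamel.2.trans hle⟩

end Oscillator

/-- The frequency `√(4 n + 5)`, the square root of the eigenvalue of `-d²/dy² + y²` that belongs
to the Hermite function of degree `2 (n + 1)`. -/
noncomputable def lagFreq (n : ℕ) : ℝ := √(4 * n + 5)

theorem sq_lagFreq (n : ℕ) : lagFreq n ^ 2 = 4 * n + 5 := sq_sqrt (by positivity)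

theorem lagFreq_pos (n : ℕ) : 0 < lagFreq n := sqrt_pos.2 (by positivity)

theorem tendsto_lagFreq : Tendsto lagFreq atTop atTop :=
  tendsto_sqrt_atTop.comp <| tendsto_atTop_add_const_right _ _ <|
    tendsto_natCast_atTop_atTop.const_mul_atTop four_pos

/-- The Hermite function of degree `2 (n + 1)`, normalized to take the value `1` at `0`. -/
noncomputable def hermiteEven (n : ℕ) (y : ℝ) : ℝ :=
  exp (-(y ^ 2 / 2)) * Lag (-1 / 2) (n + 1) (y ^ 2) / Lag (-1 / 2) (n + 1) 0

/-- The Hermite function of degree `2 n + 1`, scaled so that together with `hermiteEven` it solves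
a first-order system. -/
noncomputable def hermiteOdd (n : ℕ) (y : ℝ) : ℝ :=
  exp (-(y ^ 2 / 2)) * (y * Lag (1 / 2) n (y ^ 2)) / Lag (-1 / 2) (n + 1) 0

theorem hasDerivAt_exp_neg_sq_div_two (y : ℝ) :
    HasDerivAt (fun y => exp (-(y ^ 2 / 2))) (-y * exp (-(y ^ 2 / 2))) y := by
  refine ((hasDerivAt_pow 2 y).div_const 2).fun_neg.exp.congr_deriv ?_
  push_cast
  ring

theorem hasDerivAt_hermiteEven (n : ℕ) (y : ℝ) :
    HasDerivAt (hermiteEven n) (-y * hermiteEven n y - 2 * hermiteOdd n y) y := by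
  have hlag := (hasDerivAt_lag_succ (-1 / 2) n (y ^ 2)).comp y (hasDerivAt_pow 2 y)
  refine (((hasDerivAt_exp_neg_sq_div_two y).mul hlag).div_const _).congr_deriv ?_
  rw [show (-1 / 2 + 1 : ℝ) = 1 / 2 by norm_num]
  simp only [hermiteEven, hermiteOdd, Function.comp_apply]
  push_cast
  ring

theorem hasDerivAt_hermiteOdd (n : ℕ) (y : ℝ) :
    HasDerivAt (hermiteOdd n) (y * hermiteOdd n y + 2 * (n + 1) * hermiteEven n y) y := by
  have hlag := ((differentiable_lag (1 / 2) n (y ^ 2)).hasDerivAt).comp y (hasDerivAt_pow 2 y)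
  refine (((hasDerivAt_exp_neg_sq_div_two y).mul
    ((hasDerivAt_id' y).fun_mul hlag)).div_const _).congr_deriv ?_
  have hlower := mul_lag_add_one (show (-1 : ℝ) < -1 / 2 by norm_num) n (y ^ 2)
  have hderiv := mul_deriv_lag_add_one (show (-1 : ℝ) < -1 / 2 by norm_num) n (y ^ 2)
  rw [show (-1 / 2 + 1 : ℝ) = 1 / 2 by norm_num] at hlower hderiv
  simp only [hermiteEven, hermiteOdd, Function.comp_apply]
  push_cast
  linear_combination exp (-(y ^ 2 / 2)) / Lag (-1 / 2) (n + 1) 0 * 2 * (hderiv - hlower)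

theorem hermiteEven_zero (n : ℕ) : hermiteEven n 0 = 1 := by
  simp [hermiteEven, (lag_zero_arg_pos (show (-1 : ℝ) < -1 / 2 by norm_num) (n + 1)).ne']

theorem hermiteOdd_zero (n : ℕ) : hermiteOdd n 0 = 0 := by
  simp [hermiteOdd]

theorem exists_abs_hermite_sub_le (R : ℝ) : ∃ C, ∀ᶠ n in atTop, ∀ y ∈ Set.Icc 0 R,
    |hermiteEven n y - cos (lagFreq n * y)| ≤ C / lagFreq n ∧
      |2 / lagFreq n * hermiteOdd n y - sin (lagFreq n * y)| ≤ C / lagFreq n := by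
  refine ⟨4 * R ^ 3 + 2 * R, ?_⟩
  filter_upwards [((tendsto_pow_atTop two_ne_zero).comp tendsto_lagFreq).eventually_ge_atTop
    (2 * R ^ 2)] with n hn y hy
  have hl := lagFreq_pos n
  have hR : 0 ≤ R := hy.1.trans hy.2
  have hdiff (t : ℝ) : HasDerivAt (fun t => -t * hermiteEven n t - 2 * hermiteOdd n t)
      ((t ^ 2 - lagFreq n ^ 2) * hermiteEven n t) t := by
    refine (((hasDerivAt_id' t).fun_neg.fun_mul (hasDerivAt_hermiteEven n t)).sub
      ((hasDerivAt_hermiteOdd n t).const_mul 2)).congr_deriv ?_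
    rw [sq_lagFreq]
    ring
  have hbase := abs_sub_cos_le_of_hasDerivAt hl (hasDerivAt_hermiteEven n) hdiff
    (hermiteEven_zero n) (by simp [hermiteOdd_zero]) hn hy
  have htwo := abs_le_two_of_hasDerivAt hl (hasDerivAt_hermiteEven n) hdiff
    (hermiteEven_zero n) (by simp [hermiteOdd_zero]) hy.1
    ((by gcongr; exacts [hy.1, hy.2] : 2 * y ^ 2 ≤ 2 * R ^ 2).trans hn)
  refine ⟨hbase.1.trans (by gcongr; linarith), ?_⟩
  have hsplit : 2 / lagFreq n * hermiteOdd n y - sin (lagFreq n * y) =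
      -((-y * hermiteEven n y - 2 * hermiteOdd n y) / lagFreq n + sin (lagFreq n * y)) +
        -(y * hermiteEven n y / lagFreq n) := by ring
  rw [hsplit, add_div]
  refine (abs_add_le _ _).trans (add_le_add ((abs_neg _).trans_le hbase.2) ?_)
  rw [abs_neg, abs_div, abs_mul, abs_of_nonneg hy.1, abs_of_pos hl, mul_comm 2 R]
  gcongr
  exact hy.2

/-! ### Oscillatory integrals -/

theorem norm_integral_mul_deriv_mul_cexp_le {a b μ : ℝ} {K K' ψ ψ' : ℝ → ℝ} (hab : a ≤ b)
    (hμ : 0 < μ) (hψ : ∀ x, HasDerivAt ψ (ψ' x) x) (hψ' : Continuous ψ')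
    (hK : ContinuousOn K (Set.Icc a b)) (hKK' : ∀ x ∈ Set.Ioo a b, HasDerivAt K (K' x) x)
    (hK' : IntervalIntegrable K' volume a b) :
    ‖∫ x in a..b, ((K x * ψ' x : ℝ) : ℂ) * Complex.exp ((μ * ψ x : ℝ) * Complex.I)‖ ≤
      (|K a| + |K b| + ∫ x in a..b, |K' x|) / μ := by
  set v : ℝ → ℂ := fun x => Complex.exp ((μ * ψ x : ℝ) * Complex.I) / (μ * Complex.I) with hv_def
  have hμI : (μ * Complex.I : ℂ) ≠ 0 := mul_ne_zero (by exact_mod_cast hμ.ne') Complex.I_ne_zero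
  have hv (x : ℝ) :
      HasDerivAt v (ψ' x * Complex.exp ((μ * ψ x : ℝ) * Complex.I)) x := by
    refine (((((hψ x).const_mul μ).ofReal_comp).mul_const Complex.I).cexp.div_const
      _).congr_deriv ?_
    rw [div_eq_iff hμI]
    push_cast
    ring
  have hvnorm (x : ℝ) : ‖v x‖ = μ⁻¹ := by
    rw [hv_def, norm_div, Complex.norm_exp_ofReal_mul_I, norm_mul, Complex.norm_I, mul_one,
      Complex.norm_real, norm_of_nonneg hμ.le, one_div]
  have hψc : Continuous ψ := continuous_iff_continuousAt.2 fun x => (hψ x).continuousAt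
  have hparts := intervalIntegral.integral_mul_deriv_eq_deriv_mul_of_hasDerivAt
    (u := fun x => (K x : ℂ)) (u' := fun x => (K' x : ℂ)) (v := v)
    (by rw [Set.uIcc_of_le hab]; exact Complex.continuous_ofReal.comp_continuousOn hK)
    (fun x _ => (hv x).continuousAt.continuousWithinAt)
    (by simpa only [min_eq_left hab, max_eq_right hab] using
      fun x hx => (hKK' x hx).ofReal_comp)
    (fun x _ => hv x) ⟨hK'.1.ofReal, hK'.2.ofReal⟩ (Continuous.intervalIntegrable (by fun_prop) a b)
  have hrest : ‖∫ x in a..b, (K' x : ℂ) * v x‖ ≤ (∫ x in a..b, |K' x|) * μ⁻¹ := by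
    rw [← intervalIntegral.integral_mul_const]
    refine intervalIntegral.norm_integral_le_of_norm_le hab
      (Eventually.of_forall fun x _ => ?_) (hK'.abs.mul_const _)
    rw [norm_mul, hvnorm, Complex.norm_real, norm_eq_abs]
  simp only [Complex.ofReal_mul, mul_assoc] at hparts ⊢
  rw [hparts]
  calc _ ≤ ‖(K b : ℂ) * v b‖ + ‖(K a : ℂ) * v a‖ + ‖∫ x in a..b, (K' x : ℂ) * v x‖ :=
        (norm_sub_le _ _).trans (add_le_add_left (norm_sub_le _ _) _)
    _ ≤ |K b| * μ⁻¹ + |K a| * μ⁻¹ + (∫ x in a..b, |K' x|) * μ⁻¹ := by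
        simp only [norm_mul, hvnorm, Complex.norm_real, norm_eq_abs]
        gcongr
    _ = _ := by ring

theorem norm_integral_mul_deriv_mul_cexp_le_of_deriv_nonneg {a b μ : ℝ} {K K' ψ ψ' : ℝ → ℝ}
    (hab : a ≤ b) (hμ : 0 < μ) (hψ : ∀ x, HasDerivAt ψ (ψ' x) x) (hψ' : Continuous ψ')
    (hK : ContinuousOn K (Set.Icc a b)) (hKK' : ∀ x ∈ Set.Ioo a b, HasDerivAt K (K' x) x)
    (hK' : ∀ x ∈ Set.Icc a b, 0 ≤ K' x) (hKa : K a ≤ 0) (hKb : K b ≤ 0) :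
    ‖∫ x in a..b, ((K x * ψ' x : ℝ) : ℂ) * Complex.exp ((μ * ψ x : ℝ) * Complex.I)‖ ≤
      -(2 * K a) / μ := by
  have hint : IntervalIntegrable K' volume a b :=
    intervalIntegral.intervalIntegrable_deriv_of_nonneg (by rwa [Set.uIcc_of_le hab])
      (by simpa only [min_eq_left hab, max_eq_right hab] using hKK') fun x hx =>
        hK' x (Set.Ioo_subset_Icc_self (by simpa only [min_eq_left hab, max_eq_right hab] using hx))
  have hvar : ∫ x in a..b, |K' x| = K b - K a := by
    rw [← intervalIntegral.integral_eq_sub_of_hasDerivAt_of_le hab hK hKK' hint]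
    exact intervalIntegral.integral_congr fun x hx =>
      abs_of_nonneg (hK' x (by rwa [Set.uIcc_of_le hab] at hx))
  refine (norm_integral_mul_deriv_mul_cexp_le hab hμ hψ hψ' hK hKK' hint).trans_eq ?_
  rw [hvar, abs_of_nonpos hKa, abs_of_nonpos hKb]
  ring

theorem norm_integral_gaussian_mul_cexp_le {μ T : ℝ} (hμ : 0 < μ) (hT : 1 ≤ T) :
    ‖∫ t in (1 : ℝ)..T, (exp (-t ^ 2) : ℂ) * Complex.exp ((μ * -t ^ 2 : ℝ) * Complex.I)‖ ≤
      1 / μ := by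
  have hsq (t : ℝ) : HasDerivAt (fun t => -t ^ 2) (-(2 * t)) t := by
    simpa using (hasDerivAt_pow 2 t).fun_neg
  have hpos {t : ℝ} (ht : t ∈ Set.Icc 1 T) : 0 < t := one_pos.trans_le ht.1
  have hK {t : ℝ} (ht : 0 < t) : HasDerivAt (fun t => -(exp (-t ^ 2) / (2 * t)))
      (exp (-t ^ 2) * (1 + 1 / (2 * t ^ 2))) t := by
    refine ((hsq t).exp.fun_div ((hasDerivAt_id' t).const_mul 2) (by
      positivity)).fun_neg.congr_deriv ?_
    field_simp
    ring
  have hparts := norm_integral_mul_deriv_mul_cexp_le_of_deriv_nonneg hT hμ hsq (by fun_prop)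
    (fun t ht => (hK (hpos ht)).continuousAt.continuousWithinAt)
    (fun t ht => hK (hpos (Set.Ioo_subset_Icc_self ht))) (fun t _ => by positivity)
    (neg_nonpos.2 (by positivity)) (neg_nonpos.2 (by have := one_pos.trans_le hT; positivity))
  calc _ = _ := by
        refine congrArg norm (intervalIntegral.integral_congr fun t ht => ?_)
        rw [Set.uIcc_of_le hT] at ht
        have := hpos ht
        rw [neg_mul_neg, div_mul_cancel₀ _ (by positivity)]
    _ ≤ _ := hparts
    _ ≤ 1 / μ := by
        gcongr
        norm_num
        linarith [exp_le_one_iff.2 (show (-1 : ℝ) ≤ 0 by norm_num)]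

theorem cexp_neg_one_add_mul_I_mul_sq (μ t : ℝ) :
    Complex.exp (-(1 + μ * Complex.I) * (t : ℂ) ^ 2) =
      (exp (-t ^ 2) : ℂ) * Complex.exp ((μ * -t ^ 2 : ℝ) * Complex.I) := by
  rw [Complex.ofReal_exp, ← Complex.exp_add]
  push_cast
  ring_nf

theorem norm_integral_Ioi_one_gaussian_le {μ : ℝ} (hμ : 0 < μ) :
    ‖∫ t in Set.Ioi (1 : ℝ), Complex.exp (-(1 + μ * Complex.I) * (t : ℂ) ^ 2)‖ ≤ 1 / μ := by
  have hint := integrable_cexp_neg_mul_sq (b := 1 + μ * Complex.I) (by simp)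
  have hlim := intervalIntegral_tendsto_integral_Ioi 1 hint.integrableOn tendsto_id
  refine le_of_tendsto hlim.norm ?_
  filter_upwards [eventually_ge_atTop 1] with T hT
  simp_rw [cexp_neg_one_add_mul_I_mul_sq]
  exact norm_integral_gaussian_mul_cexp_le hμ hT

theorem sqrt_mul_cpow_one_half {a : ℝ} (ha : 0 < a) {z : ℂ} (hz : z ≠ 0) :
    (√a : ℂ) * z ^ (1 / 2 : ℂ) = (a * z) ^ (1 / 2 : ℂ) := by
  have ha' : (a : ℂ) ≠ 0 := by exact_mod_cast ha.ne'
  rw [Complex.cpow_def_of_ne_zero hz, Complex.cpow_def_of_ne_zero (mul_ne_zero ha' hz),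
    Complex.log_ofReal_mul ha hz, add_mul, Complex.exp_add, sqrt_eq_rpow, rpow_def_of_pos ha]
  push_cast
  rfl

theorem tendsto_sqrt_mul_cpow_one_half :
    Tendsto (fun μ : ℝ => (√μ : ℂ) * (π / (1 + μ * Complex.I)) ^ (1 / 2 : ℂ)) atTop
      (nhds (√π * Complex.exp ((-(π / 4) : ℝ) * Complex.I))) := by
  have hlim : Tendsto (fun μ : ℝ => (π : ℂ) / ((μ⁻¹ : ℝ) + Complex.I)) atTop
      (nhds (π * -Complex.I)) := by
    have hden := ((Complex.continuous_ofReal.tendsto 0).comp tendsto_inv_atTop_zero).add_const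
      Complex.I
    have hquot : Tendsto (fun μ : ℝ => (π : ℂ) / ((μ⁻¹ : ℝ) + Complex.I)) atTop
        (nhds (π / ((0 : ℝ) + Complex.I))) := tendsto_const_nhds.div hden (by simp)
    simpa [div_eq_mul_inv] using hquot
  have hval : ((π : ℂ) * -Complex.I) ^ (1 / 2 : ℂ) =
      √π * Complex.exp ((-(π / 4) : ℝ) * Complex.I) := by
    rw [← sqrt_mul_cpow_one_half pi_pos (neg_ne_zero.2 Complex.I_ne_zero),
      Complex.cpow_def_of_ne_zero (neg_ne_zero.2 Complex.I_ne_zero), Complex.log_neg_I]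
    push_cast
    ring_nf
  rw [← hval]
  refine (hlim.cpow tendsto_const_nhds (Or.inr (by simp [pi_ne_zero]))).congr' ?_
  filter_upwards [eventually_gt_atTop 0] with μ hμ
  have hμ' : (μ : ℂ) ≠ 0 := by exact_mod_cast hμ.ne'
  have hden : 1 + μ * Complex.I ≠ 0 := fun h => by simpa using congrArg Complex.re h
  rw [sqrt_mul_cpow_one_half hμ (div_ne_zero (by exact_mod_cast pi_ne_zero) hden)]
  congr 1
  push_cast
  field_simp

theorem tendsto_sqrt_mul_integral_gaussian :
    Tendsto (fun μ : ℝ => (√μ : ℂ) * ∫ t in (0 : ℝ)..1, (exp (-t ^ 2) : ℂ) *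
      Complex.exp ((μ * -t ^ 2 : ℝ) * Complex.I)) atTop
      (nhds (√π / 2 * Complex.exp ((-(π / 4) : ℝ) * Complex.I))) := by
  have htail : Tendsto (fun μ : ℝ => (√μ : ℂ) *
      ∫ t in Set.Ioi (1 : ℝ), Complex.exp (-(1 + μ * Complex.I) * (t : ℂ) ^ 2)) atTop (nhds 0) := by
    refine squeeze_zero_norm' ?_ (tendsto_inv_atTop_zero.comp tendsto_sqrt_atTop)
    filter_upwards [eventually_gt_atTop 0] with μ hμ
    rw [norm_mul, Complex.norm_real, norm_of_nonneg (sqrt_nonneg μ)]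
    refine (mul_le_mul_of_nonneg_left (norm_integral_Ioi_one_gaussian_le hμ)
      (sqrt_nonneg μ)).trans_eq ?_
    rw [mul_one_div, sqrt_div_self', one_div, Function.comp_apply]
  have hsplit (μ : ℝ) : ∫ t in (0 : ℝ)..1, (exp (-t ^ 2) : ℂ) *
      Complex.exp ((μ * -t ^ 2 : ℝ) * Complex.I) =
      (π / (1 + μ * Complex.I)) ^ (1 / 2 : ℂ) / 2 -
        ∫ t in Set.Ioi (1 : ℝ), Complex.exp (-(1 + μ * Complex.I) * (t : ℂ) ^ 2) := by
    have hint := integrable_cexp_neg_mul_sq (b := 1 + μ * Complex.I) (by simp)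
    rw [← integral_gaussian_complex_Ioi (by simp),
      intervalIntegral.integral_Ioi_sub_Ioi hint.integrableOn zero_le_one]
    simp_rw [cexp_neg_one_add_mul_I_mul_sq]
  have hlim := (tendsto_sqrt_mul_cpow_one_half.div_const 2).sub htail
  rw [sub_zero, mul_div_right_comm] at hlim
  refine hlim.congr fun μ => ?_
  rw [hsplit]
  ring

section StationaryPoint

variable {F F' : ℝ → ℝ} {C : ℝ}

theorem abs_le_mul_sq_of_hasDerivAt (hF : ∀ φ, HasDerivAt F (F' φ) φ) (h0 : F 0 = 0)
    (hF'C : ∀ φ ∈ Set.Icc 0 (π / 2), |F' φ| ≤ C * φ) {φ : ℝ} (hφ : φ ∈ Set.Icc 0 (π / 2)) :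
    |F φ| ≤ C * φ ^ 2 := by
  rcases hφ.1.eq_or_lt with rfl | hpos
  · simp [h0]
  have hC : 0 ≤ C := nonneg_of_mul_nonneg_left ((abs_nonneg _).trans (hF'C φ hφ)) hpos
  have hmvt := norm_image_sub_le_of_norm_deriv_le_segment' (C := C * φ)
    (fun t _ => (hF t).hasDerivWithinAt) (fun t ht => (hF'C t ⟨ht.1, ht.2.le.trans hφ.2⟩).trans
      (mul_le_mul_of_nonneg_left ht.2.le hC)) φ ⟨hφ.1, le_rfl⟩
  simpa [h0, sq, mul_assoc] using hmvt

theorem continuousOn_div_sin (hF : ∀ φ, HasDerivAt F (F' φ) φ) (h0 : F 0 = 0)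
    (hF'C : ∀ φ ∈ Set.Icc 0 (π / 2), |F' φ| ≤ C * φ) :
    ContinuousOn (fun φ => F φ / sin φ) (Set.Icc 0 (π / 2)) := by
  intro φ hφ
  rcases hφ.1.eq_or_lt with rfl | hpos
  · have hbound (t : ℝ) (ht : t ∈ Set.Icc 0 (π / 2)) : ‖F t / sin t‖ ≤ C * (π / 2) * t := by
      rcases ht.1.eq_or_lt with rfl | htpos
      · simp
      have hsin : 0 < sin t := sin_pos_of_pos_of_lt_pi htpos (by linarith [ht.2, pi_pos])
      rw [norm_div, norm_of_nonneg hsin.le, div_le_iff₀ hsin]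
      have hC : 0 ≤ C := nonneg_of_mul_nonneg_left ((abs_nonneg _).trans (hF'C t ht)) htpos
      calc |F t| ≤ C * t ^ 2 := abs_le_mul_sq_of_hasDerivAt hF h0 hF'C ht
        _ = C * (π / 2) * t * (2 / π * t) := by field_simp
        _ ≤ C * (π / 2) * t * sin t := by gcongr; exact mul_le_sin ht.1 ht.2
    have hzero : Tendsto (fun t => C * (π / 2) * t) (nhdsWithin 0 (Set.Icc 0 (π / 2))) (nhds 0) :=
      ((continuous_const_mul (C * (π / 2))).tendsto' 0 0 (mul_zero _)).mono_left nhdsWithin_le_nhds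
    rw [ContinuousWithinAt, h0, zero_div]
    exact squeeze_zero_norm' (eventually_mem_nhdsWithin.mono hbound) hzero
  · have hsin : sin φ ≠ 0 := (sin_pos_of_pos_of_lt_pi hpos (by linarith [hφ.2, pi_pos])).ne'
    exact ((hF φ).continuousAt.div continuous_sin.continuousAt hsin).continuousWithinAt

theorem intervalIntegrable_deriv_div_sin (hF : ∀ φ, HasDerivAt F (F' φ) φ) (hF' : Continuous F')
    (h0 : F 0 = 0) (hF'C : ∀ φ ∈ Set.Icc 0 (π / 2), |F' φ| ≤ C * φ) :
    IntervalIntegrable (fun φ => (F' φ * sin φ - F φ * cos φ) / sin φ ^ 2) volume 0 (π / 2) := by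
  have hpi : 0 ≤ π / 2 := by positivity
  have hFc : Continuous F := continuous_iff_continuousAt.2 fun φ => (hF φ).continuousAt
  have hsin {φ : ℝ} (hφ : φ ∈ Set.Ioc 0 (π / 2)) : 0 < sin φ :=
    sin_pos_of_pos_of_lt_pi hφ.1 (by linarith [hφ.2, pi_pos])
  have hcont : ContinuousOn (fun φ => (F' φ * sin φ - F φ * cos φ) / sin φ ^ 2)
      (Set.Ioc 0 (π / 2)) :=
    ContinuousOn.div (by fun_prop) (by fun_prop) fun φ hφ => (pow_pos (hsin hφ) 2).ne'
  rw [intervalIntegrable_iff_integrableOn_Ioc_of_le hpi]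
  refine IntegrableOn.of_bound (by simp) (hcont.aestronglyMeasurable measurableSet_Ioc)
    (C * (π / 2) + C * (π / 2) ^ 2) ?_
  refine (ae_restrict_mem measurableSet_Ioc).mono fun φ hφ => ?_
  have hmem := Set.Ioc_subset_Icc_self hφ
  have hC : 0 ≤ C := nonneg_of_mul_nonneg_left ((abs_nonneg _).trans (hF'C φ hmem)) hφ.1
  have hφsin : φ ≤ π / 2 * sin φ := by
    have := mul_le_sin hφ.1.le hφ.2
    rw [div_mul_eq_mul_div, div_le_iff₀ pi_pos] at this
    linarith
  rw [norm_div, norm_of_nonneg (sq_nonneg (sin φ)), div_le_iff₀ (pow_pos (hsin hφ) 2)]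
  calc ‖F' φ * sin φ - F φ * cos φ‖ ≤ |F' φ| * sin φ + |F φ| * |cos φ| := by
        simpa [abs_mul, abs_of_pos (hsin hφ)] using norm_sub_le (F' φ * sin φ) (F φ * cos φ)
    _ ≤ C * φ * sin φ + C * φ ^ 2 * 1 := by
        gcongr
        exacts [(hsin hφ).le, hF'C φ hmem,
          abs_le_mul_sq_of_hasDerivAt hF h0 hF'C hmem, abs_cos_le_one φ]
    _ ≤ C * (π / 2 * sin φ) * sin φ + C * (π / 2 * sin φ) ^ 2 * 1 := by
        have := hφ.1.le
        have := (hsin hφ).le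
        gcongr
    _ = (C * (π / 2) + C * (π / 2) ^ 2) * sin φ ^ 2 := by ring

theorem exists_norm_integral_mul_cexp_cos_le (hF : ∀ φ, HasDerivAt F (F' φ) φ)
    (hF' : Continuous F') (h0 : F 0 = 0) (hF'C : ∀ φ ∈ Set.Icc 0 (π / 2), |F' φ| ≤ C * φ) :
    ∃ B, ∀ μ > 0, ‖∫ φ in (0 : ℝ)..(π / 2),
      (F φ : ℂ) * Complex.exp ((μ * cos φ : ℝ) * Complex.I)‖ ≤ B / μ := by
  have hpi : 0 ≤ π / 2 := by positivity
  refine ⟨|F 0 / sin 0| + |F (π / 2) / sin (π / 2)| +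
    ∫ φ in (0 : ℝ)..(π / 2), |(F' φ * sin φ - F φ * cos φ) / sin φ ^ 2|, fun μ hμ => ?_⟩
  have hparts := norm_integral_mul_deriv_mul_cexp_le hpi hμ hasDerivAt_cos
    continuous_sin.neg (continuousOn_div_sin hF h0 hF'C) (fun φ hφ => (hF φ).fun_div
      (hasDerivAt_sin φ) (sin_pos_of_pos_of_lt_pi hφ.1 (by linarith [hφ.2, pi_pos])).ne')
    (intervalIntegrable_deriv_div_sin hF hF' h0 hF'C)
  refine Eq.trans_le ?_ hparts
  rw [← norm_neg, ← intervalIntegral.integral_neg]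
  refine congrArg norm (intervalIntegral.integral_congr fun φ hφ => ?_)
  rw [Set.uIcc_of_le hpi] at hφ
  have hcancel : F φ / sin φ * -sin φ = -F φ := by
    rcases hφ.1.eq_or_lt with rfl | hpos
    · simp [h0]
    · have := (sin_pos_of_pos_of_lt_pi hpos (by linarith [hφ.2, pi_pos])).ne'
      field_simp
  simp only [hcancel, Complex.ofReal_neg, neg_mul]

end StationaryPoint

theorem integral_comp_sin_eq_two_mul_integral_comp_cos {g : ℝ → ℂ} (hg : Continuous g) :
    ∫ θ in (0 : ℝ)..π, g (sin θ) = 2 * ∫ φ in (0 : ℝ)..(π / 2), g (cos φ) := by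
  have hshift : ∫ θ in (0 : ℝ)..π, g (sin θ) = ∫ φ in (-(π / 2))..(π / 2), g (cos φ) := by
    have h := intervalIntegral.integral_comp_sub_right (a := 0) (b := π)
      (fun φ => g (cos φ)) (π / 2)
    simp only [cos_sub_pi_div_two, zero_sub, sub_half] at h
    exact h
  have heven : ∫ φ in (-(π / 2))..0, g (cos φ) = ∫ φ in (0 : ℝ)..(π / 2), g (cos φ) := by
    simpa using
      (intervalIntegral.integral_comp_neg (a := 0) (b := π / 2) fun φ => g (cos φ)).symm
  have hint (a b : ℝ) : IntervalIntegrable (fun φ => g (cos φ)) volume a b :=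
    (hg.comp continuous_cos).intervalIntegrable a b
  rw [hshift, ← intervalIntegral.integral_add_adjacent_intervals (hint _ 0) (hint 0 _), heven,
    two_mul]

/-
The substitution `t = √2 sin (φ / 2)` turns `cos φ` into `1 - t ^ 2`, so this amplitude reduces the
stationary point of `cos` to a Fresnel integral.
-/
theorem integral_cos_half_mul_cexp_cos (μ : ℝ) :
    ∫ φ in (0 : ℝ)..(π / 2), ((cos (φ / 2) * exp (cos φ - 1) : ℝ) : ℂ) *
        Complex.exp ((μ * cos φ : ℝ) * Complex.I) =
      √2 * Complex.exp (μ * Complex.I) * ∫ t in (0 : ℝ)..1, (exp (-t ^ 2) : ℂ) *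
        Complex.exp ((μ * -t ^ 2 : ℝ) * Complex.I) := by
  have hderiv (φ : ℝ) :
      HasDerivAt (fun φ => √2 * sin (φ / 2)) (√2 / 2 * cos (φ / 2)) φ := by
    refine (((hasDerivAt_id' φ).div_const 2).sin.const_mul √2).congr_deriv ?_
    ring
  have hsubst := intervalIntegral.integral_deriv_smul_comp (a := 0) (b := π / 2)
    (g := fun t : ℝ => (exp (-t ^ 2) : ℂ) * Complex.exp ((μ * -t ^ 2 : ℝ) * Complex.I))
    (fun φ _ => hderiv φ) (by fun_prop) (by fun_prop)
  have hend : √2 * sin (π / 2 / 2) = 1 := by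
    rw [div_div, show (2 * 2 : ℝ) = 4 by norm_num, sin_pi_div_four]
    linarith [mul_self_sqrt (zero_le_two (α := ℝ))]
  rw [zero_div, sin_zero, mul_zero, hend] at hsubst
  rw [← hsubst, ← intervalIntegral.integral_const_mul]
  refine intervalIntegral.integral_congr fun φ _ => ?_
  have hcos : -(√2 * sin (φ / 2)) ^ 2 = cos φ - 1 := by
    rw [mul_pow, sq_sqrt zero_le_two, ← mul_div_cancel₀ φ two_ne_zero, cos_two_mul, cos_sq']
    ring_nf
  have hphase : Complex.exp ((μ * cos φ : ℝ) * Complex.I) =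
      Complex.exp (μ * Complex.I) * Complex.exp ((μ * (cos φ - 1) : ℝ) * Complex.I) := by
    rw [← Complex.exp_add]
    push_cast
    ring_nf
  have hsqrt : (√2 : ℂ) * √2 = 2 := by exact_mod_cast mul_self_sqrt (zero_le_two (α := ℝ))
  simp only [Function.comp_apply, hcos, hphase, Complex.real_smul]
  push_cast
  linear_combination -(Complex.cos (φ / 2) * Complex.exp (Complex.cos φ - 1) *
    Complex.exp (μ * Complex.I) * Complex.exp (μ * (Complex.cos φ - 1) * Complex.I)) / 2 * hsqrt

theorem exists_norm_integral_comp_cos_sub_le {G G' : ℝ → ℝ} (hG : ∀ s, HasDerivAt G (G' s) s)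
    (hG' : Continuous G') : ∃ B, ∀ μ > 0, ‖∫ φ in (0 : ℝ)..(π / 2),
      ((G (cos φ) - G 1 * (cos (φ / 2) * exp (cos φ - 1)) : ℝ) : ℂ) *
        Complex.exp ((μ * cos φ : ℝ) * Complex.I)‖ ≤ B / μ := by
  obtain ⟨M, hM⟩ := isCompact_Icc.exists_bound_of_continuousOn (s := Set.Icc (-1 : ℝ) 1)
    hG'.continuousOn
  have hF (φ : ℝ) : HasDerivAt (fun φ => G (cos φ) - G 1 * (cos (φ / 2) * exp (cos φ - 1)))
      (G' (cos φ) * -sin φ + G 1 * exp (cos φ - 1) * (sin (φ / 2) / 2 + cos (φ / 2) * sin φ))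
      φ := by
    refine (((hG (cos φ)).comp φ (hasDerivAt_cos φ)).sub (((((hasDerivAt_id' φ).div_const
      2).cos).fun_mul ((hasDerivAt_cos φ).sub_const 1).exp).const_mul (G 1))).congr_deriv ?_
    ring
  refine exists_norm_integral_mul_cexp_cos_le (C := M + |G 1| * 2) hF (by fun_prop) (by simp)
    fun φ hφ => ?_
  have hsin {t : ℝ} (ht : 0 ≤ t) : |sin t| ≤ t := by
    simpa [abs_of_nonneg ht] using abs_sin_le_abs (x := t)
  have hexp : exp (cos φ - 1) ≤ 1 := exp_le_one_iff.2 (by linarith [cos_le_one φ])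
  have hamp : |sin (φ / 2) / 2 + cos (φ / 2) * sin φ| ≤ 2 * φ := by
    refine (abs_add_le _ _).trans ?_
    rw [abs_div, abs_two, abs_mul]
    have h1 := hsin (t := φ / 2) (by linarith [hφ.1])
    have h2 := mul_le_mul (abs_cos_le_one (φ / 2)) (hsin hφ.1) (abs_nonneg _) zero_le_one
    linarith [hφ.1]
  calc |G' (cos φ) * -sin φ + G 1 * exp (cos φ - 1) * (sin (φ / 2) / 2 + cos (φ / 2) * sin φ)|
      ≤ |G' (cos φ)| * |sin φ| +
          |G 1| * exp (cos φ - 1) * |sin (φ / 2) / 2 + cos (φ / 2) * sin φ| := by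
        simpa only [abs_mul, abs_neg, abs_exp] using abs_add_le (G' (cos φ) * -sin φ)
          (G 1 * exp (cos φ - 1) * (sin (φ / 2) / 2 + cos (φ / 2) * sin φ))
    _ ≤ M * φ + |G 1| * 1 * (2 * φ) := by
        have hM0 := hM (cos φ) ⟨neg_one_le_cos φ, cos_le_one φ⟩
        gcongr
        exacts [(norm_nonneg _).trans hM0, hM0, hsin hφ.1]
    _ = (M + |G 1| * 2) * φ := by ring

theorem integral_comp_cos_mul_cexp_eq_add {G : ℝ → ℝ} (hG : Continuous G) (μ : ℝ) :
    ∫ φ in (0 : ℝ)..(π / 2), (G (cos φ) : ℂ) * Complex.exp ((μ * cos φ : ℝ) * Complex.I) =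
      (∫ φ in (0 : ℝ)..(π / 2), ((G (cos φ) - G 1 * (cos (φ / 2) * exp (cos φ - 1)) : ℝ) : ℂ) *
        Complex.exp ((μ * cos φ : ℝ) * Complex.I)) +
      G 1 * ∫ φ in (0 : ℝ)..(π / 2), ((cos (φ / 2) * exp (cos φ - 1) : ℝ) : ℂ) *
        Complex.exp ((μ * cos φ : ℝ) * Complex.I) := by
  rw [← intervalIntegral.integral_const_mul, ← intervalIntegral.integral_add
    (Continuous.intervalIntegrable (by fun_prop) _ _)
    (Continuous.intervalIntegrable (by fun_prop) _ _)]
  refine intervalIntegral.integral_congr fun φ _ => ?_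
  simp only [Complex.ofReal_sub, Complex.ofReal_mul]
  ring

theorem tendsto_sqrt_mul_integral_comp_cos_sub {G G' : ℝ → ℝ} (hG : ∀ s, HasDerivAt G (G' s) s)
    (hG' : Continuous G') :
    Tendsto (fun μ : ℝ => (√μ : ℂ) * (∫ φ in (0 : ℝ)..(π / 2),
        (G (cos φ) : ℂ) * Complex.exp ((μ * cos φ : ℝ) * Complex.I)) -
      G 1 * √2 * Complex.exp (μ * Complex.I) *
        (√π / 2 * Complex.exp ((-(π / 4) : ℝ) * Complex.I))) atTop (nhds 0) := by
  obtain ⟨B, hB⟩ := exists_norm_integral_comp_cos_sub_le hG hG'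
  have hGc : Continuous G := continuous_iff_continuousAt.2 fun s => (hG s).continuousAt
  have hrem : Tendsto (fun μ : ℝ => (√μ : ℂ) * ∫ φ in (0 : ℝ)..(π / 2),
      ((G (cos φ) - G 1 * (cos (φ / 2) * exp (cos φ - 1)) : ℝ) : ℂ) *
        Complex.exp ((μ * cos φ : ℝ) * Complex.I)) atTop (nhds 0) := by
    have hnull : Tendsto (fun μ => B * (√μ)⁻¹) atTop (nhds 0) := by
      simpa using (tendsto_inv_atTop_zero.comp tendsto_sqrt_atTop).const_mul B
    refine squeeze_zero_norm' ?_ hnull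
    filter_upwards [eventually_gt_atTop 0] with μ hμ
    rw [norm_mul, Complex.norm_real, norm_of_nonneg (sqrt_nonneg μ)]
    refine (mul_le_mul_of_nonneg_left (hB μ hμ) (sqrt_nonneg μ)).trans_eq ?_
    rw [mul_div_left_comm, sqrt_div_self', one_div]
  have hgauss := tendsto_sub_nhds_zero_iff.2 tendsto_sqrt_mul_integral_gaussian
  have hmain : Tendsto (fun μ : ℝ => G 1 * √2 * Complex.exp (μ * Complex.I) *
      ((√μ : ℂ) * (∫ t in (0 : ℝ)..1, (exp (-t ^ 2) : ℂ) *
        Complex.exp ((μ * -t ^ 2 : ℝ) * Complex.I)) -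
          √π / 2 * Complex.exp ((-(π / 4) : ℝ) * Complex.I))) atTop (nhds 0) := by
    rw [tendsto_zero_iff_norm_tendsto_zero] at hgauss ⊢
    simpa [Complex.norm_exp_ofReal_mul_I] using hgauss.const_mul ‖(G 1 : ℂ) * √2‖
  refine (add_zero (0 : ℂ) ▸ hrem.add hmain).congr fun μ => ?_
  rw [integral_comp_cos_mul_cexp_eq_add hGc, integral_cos_half_mul_cexp_cos]
  ring

theorem tendsto_sqrt_mul_integral_comp_sin_sub {G G' : ℝ → ℝ} (hG : ∀ s, HasDerivAt G (G' s) s)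
    (hG' : Continuous G') :
    Tendsto (fun μ : ℝ => (√μ : ℂ) * (∫ θ in (0 : ℝ)..π,
        (G (sin θ) : ℂ) * Complex.exp ((μ * sin θ : ℝ) * Complex.I)) -
      (√(2 * π) * G 1 : ℝ) * Complex.exp ((μ - π / 4 : ℝ) * Complex.I)) atTop (nhds 0) := by
  have hGc : Continuous G := continuous_iff_continuousAt.2 fun s => (hG s).continuousAt
  refine (mul_zero (2 : ℂ) ▸ (tendsto_sqrt_mul_integral_comp_cos_sub hG hG').const_mul 2).congr
    fun μ => ?_
  have hphase : Complex.exp ((μ - π / 4 : ℝ) * Complex.I) =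
      Complex.exp (μ * Complex.I) * Complex.exp ((-(π / 4) : ℝ) * Complex.I) := by
    rw [← Complex.exp_add]
    push_cast
    ring_nf
  rw [integral_comp_sin_eq_two_mul_integral_comp_cos
    (g := fun s => (G s : ℂ) * Complex.exp ((μ * s : ℝ) * Complex.I)) (by fun_prop), hphase,
    sqrt_mul zero_le_two]
  push_cast
  ring

theorem tendsto_sqrt_mul_integral_comp_sin_mul_cos_sub {G G' : ℝ → ℝ}
    (hG : ∀ s, HasDerivAt G (G' s) s) (hG' : Continuous G') :
    Tendsto (fun μ : ℝ => √μ * (∫ θ in (0 : ℝ)..π, G (sin θ) * cos (μ * sin θ)) -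
      √(2 * π) * G 1 * cos (μ - π / 4)) atTop (nhds 0) := by
  have hGc : Continuous G := continuous_iff_continuousAt.2 fun s => (hG s).continuousAt
  refine ((Complex.continuous_re.tendsto 0).comp
    (tendsto_sqrt_mul_integral_comp_sin_sub hG hG')).congr fun μ => ?_
  have hre := Complex.reCLM.intervalIntegral_comp_comm (μ := volume) (a := 0) (b := π)
    (f := fun θ => (G (sin θ) : ℂ) * Complex.exp ((μ * sin θ : ℝ) * Complex.I))
    (Continuous.intervalIntegrable (by fun_prop) _ _)
  simp only [Complex.reCLM_apply, Complex.re_ofReal_mul, Complex.exp_ofReal_mul_I_re] at hre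
  simp only [Function.comp_apply, Complex.sub_re, Complex.re_ofReal_mul,
    Complex.exp_ofReal_mul_I_re, hre]

theorem tendsto_sqrt_mul_integral_comp_sin_mul_sin_sub {G G' : ℝ → ℝ}
    (hG : ∀ s, HasDerivAt G (G' s) s) (hG' : Continuous G') :
    Tendsto (fun μ : ℝ => √μ * (∫ θ in (0 : ℝ)..π, G (sin θ) * sin (μ * sin θ)) -
      √(2 * π) * G 1 * sin (μ - π / 4)) atTop (nhds 0) := by
  have hGc : Continuous G := continuous_iff_continuousAt.2 fun s => (hG s).continuousAt
  refine ((Complex.continuous_im.tendsto 0).comp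
    (tendsto_sqrt_mul_integral_comp_sin_sub hG hG')).congr fun μ => ?_
  have him := Complex.imCLM.intervalIntegral_comp_comm (μ := volume) (a := 0) (b := π)
    (f := fun θ => (G (sin θ) : ℂ) * Complex.exp ((μ * sin θ : ℝ) * Complex.I))
    (Continuous.intervalIntegrable (by fun_prop) _ _)
  simp only [Complex.imCLM_apply, Complex.im_ofReal_mul, Complex.exp_ofReal_mul_I_im] at him
  simp only [Function.comp_apply, Complex.sub_im, Complex.im_ofReal_mul,
    Complex.exp_ofReal_mul_I_im, him]

/-! ### Asymptotics of Laguerre polynomials -/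

theorem integral_sin_pow_two_mul (n : ℕ) :
    ∫ θ in (0 : ℝ)..π, sin θ ^ (2 * n) =
      π * (Gamma (n + 1 / 2) / (Gamma (1 / 2) * n.factorial)) := by
  have hΓ : Gamma (1 / 2) ≠ 0 := (Gamma_pos_of_pos (by norm_num)).ne'
  rw [integral_sin_pow_even]
  congr 1
  induction n with
  | zero => simp [div_self hΓ, -one_div]
  | succ n ih =>
    have hstep : ((n + 1 : ℕ) : ℝ) + 1 / 2 = n + 1 / 2 + 1 := by
      push_cast
      ring
    rw [Finset.prod_range_succ, ih, Nat.factorial_succ, hstep,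
      Gamma_add_one (by positivity : (n : ℝ) + 1 / 2 ≠ 0)]
    push_cast
    field_simp

theorem integral_sin_pow_mul_lag (j m : ℕ) (x : ℝ) :
    ∫ θ in (0 : ℝ)..π, sin θ ^ (2 * j) * Lag ((j : ℝ) - 1 / 2) m (x * sin θ ^ 2) =
      π * (Lag j m x * Lag (-1 / 2) (m + j) 0) := by
  have hexpand (θ : ℝ) : sin θ ^ (2 * j) * Lag ((j : ℝ) - 1 / 2) m (x * sin θ ^ 2) =
      ∑ k ∈ Finset.range (m + 1),
        lagCoeff ((j : ℝ) - 1 / 2) m k * x ^ k * sin θ ^ (2 * (k + j)) := by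
    rw [lag_eq_sum_lagCoeff _ m.lt_succ_self, Finset.mul_sum]
    refine Finset.sum_congr rfl fun k _ => ?_
    rw [mul_pow, ← pow_mul, mul_add, pow_add]
    ring
  simp_rw [hexpand]
  rw [intervalIntegral.integral_finsetSum fun k _ =>
      Continuous.intervalIntegrable (by fun_prop) _ _,
    lag_eq_sum_lagCoeff _ m.lt_succ_self, lag_zero_arg, Finset.sum_mul, Finset.mul_sum]
  refine Finset.sum_congr rfl fun k _ => ?_
  rw [intervalIntegral.integral_const_mul, integral_sin_pow_two_mul]
  have hfact (i : ℕ) : Gamma ((i : ℝ) + j + 1) = (i + j).factorial := by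
    rw [← Nat.cast_add, Gamma_nat_eq_factorial]
  have hhalf (i : ℕ) : (i : ℝ) + (j - 1 / 2) + 1 = i + j + 1 / 2 := by ring
  have : Gamma ((k : ℝ) + j + 1 / 2) ≠ 0 := (Gamma_pos_of_pos (by positivity)).ne'
  simp only [lagCoeff, hfact, hhalf, Nat.cast_add,
    show (m : ℝ) + j + -1 / 2 + 1 = m + j + 1 / 2 by ring,
    show (-1 : ℝ) / 2 + 1 = 1 / 2 by norm_num]
  field_simp

theorem exp_mul_exp_neg_mul (y a : ℝ) : exp (y ^ 2 / 2) * (exp (-(y ^ 2 / 2)) * a) = a := by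
  rw [← mul_assoc, ← exp_add, add_neg_cancel, exp_zero, one_mul]

theorem integral_exp_mul_hermiteEven (n : ℕ) (r : ℝ) :
    ∫ θ in (0 : ℝ)..π, exp ((r * sin θ) ^ 2 / 2) * hermiteEven n (r * sin θ) =
      π * Lag 0 (n + 1) (r ^ 2) := by
  have hint := integral_sin_pow_mul_lag 0 (n + 1) (r ^ 2)
  have hpos := lag_zero_arg_pos (show (-1 : ℝ) < -1 / 2 by norm_num) (n + 1)
  simp only [mul_zero, pow_zero, one_mul, Nat.cast_zero, add_zero, zero_sub, ← neg_div,
    ← mul_pow] at hint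
  rw [← mul_assoc, ← div_eq_iff hpos.ne', ← intervalIntegral.integral_div] at hint
  simpa only [hermiteEven, mul_div_assoc, exp_mul_exp_neg_mul] using hint

theorem integral_sin_mul_exp_mul_hermiteOdd (n : ℕ) (r : ℝ) :
    ∫ θ in (0 : ℝ)..π, sin θ * exp ((r * sin θ) ^ 2 / 2) * hermiteOdd n (r * sin θ) =
      π * (r * Lag 1 n (r ^ 2)) := by
  have hint := integral_sin_pow_mul_lag 1 n (r ^ 2)
  have hpos := lag_zero_arg_pos (show (-1 : ℝ) < -1 / 2 by norm_num) (n + 1)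
  simp only [mul_one, Nat.cast_one, show (1 : ℝ) - 1 / 2 = 1 / 2 by norm_num, ← mul_pow] at hint
  rw [← mul_assoc, ← div_eq_iff hpos.ne', ← intervalIntegral.integral_div] at hint
  rw [mul_left_comm, ← hint, ← intervalIntegral.integral_const_mul]
  refine intervalIntegral.integral_congr fun θ _ => ?_
  simp only [hermiteOdd, mul_div_assoc, mul_assoc (sin θ), exp_mul_exp_neg_mul]
  ring

/-- After a positive normalization, the Laguerre polynomials of order `ν` and `ν + 1` at `r ^ 2`
oscillate in quadrature with frequency `lagFreq` and phase shift `α`. -/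
def LagAsymp (ν α r : ℝ) : Prop :=
  ∃ c : ℕ → ℝ, (∀ n, 0 < c n) ∧
    Tendsto (fun n => c n * Lag ν (n + 1) (r ^ 2) - cos (lagFreq n * r - α)) atTop (nhds 0) ∧
    Tendsto (fun n => c n * (2 * r / lagFreq n * Lag (ν + 1) n (r ^ 2)) -
      sin (lagFreq n * r - α)) atTop (nhds 0)

theorem tendsto_const_div_lagFreq (C : ℝ) : Tendsto (fun n => C / lagFreq n) atTop (nhds 0) :=
  tendsto_const_nhds.div_atTop tendsto_lagFreq

theorem lagAsymp_neg_half {r : ℝ} (hr : 0 ≤ r) : LagAsymp (-1 / 2) 0 r := by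
  obtain ⟨C, hC⟩ := exists_abs_hermite_sub_le r
  have hpos := lag_zero_arg_pos (show (-1 : ℝ) < -1 / 2 by norm_num)
  refine ⟨fun n => exp (-(r ^ 2 / 2)) / Lag (-1 / 2) (n + 1) 0,
    fun n => div_pos (exp_pos _) (hpos _),
    squeeze_zero_norm' ?_ (tendsto_const_div_lagFreq C),
    squeeze_zero_norm' ?_ (tendsto_const_div_lagFreq C)⟩
  · filter_upwards [hC] with n hn
    refine le_of_eq_of_le ?_ (hn r ⟨hr, le_rfl⟩).1
    rw [norm_eq_abs, sub_zero, hermiteEven, div_mul_eq_mul_div]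
  · filter_upwards [hC] with n hn
    refine le_of_eq_of_le ?_ (hn r ⟨hr, le_rfl⟩).2
    rw [norm_eq_abs, sub_zero, hermiteOdd, show (-1 / 2 + 1 : ℝ) = 1 / 2 by norm_num]
    congr 2
    ring

theorem abs_integral_mul_sub_le {f g h : ℝ → ℝ} {A B : ℝ} (hf : Continuous f) (hg : Continuous g)
    (hh : Continuous h) (hA : ∀ θ ∈ Set.Icc 0 π, |h θ| ≤ A)
    (hB : ∀ θ ∈ Set.Icc 0 π, |f θ - g θ| ≤ B) :
    |(∫ θ in (0 : ℝ)..π, h θ * f θ) - ∫ θ in (0 : ℝ)..π, h θ * g θ| ≤ A * B * π := by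
  rw [← intervalIntegral.integral_sub ((hh.fun_mul hf).intervalIntegrable _ _)
    ((hh.fun_mul hg).intervalIntegrable _ _)]
  have hbound : ∀ θ ∈ Set.uIoc 0 π, ‖h θ * f θ - h θ * g θ‖ ≤ A * B := fun θ hθ => by
    have hθ' : θ ∈ Set.Icc 0 π := Set.Ioc_subset_Icc_self (Set.uIoc_of_le pi_pos.le ▸ hθ)
    rw [← mul_sub, norm_eq_abs, abs_mul]
    exact mul_le_mul (hA θ hθ') (hB θ hθ') (abs_nonneg _) ((abs_nonneg _).trans (hA θ hθ'))
  simpa [abs_of_pos pi_pos] using intervalIntegral.norm_integral_le_of_norm_le_const hbound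

theorem tendsto_sqrt_lagFreq_mul_integral_sub {f g : ℕ → ℝ → ℝ} {h : ℝ → ℝ} {C : ℝ} (r : ℝ)
    (hf : ∀ n, Continuous (f n)) (hg : ∀ n, Continuous (g n)) (hh : Continuous h)
    (hfg : ∀ᶠ n in atTop, ∀ θ ∈ Set.Icc 0 π, |f n θ - g n θ| ≤ C / lagFreq n) :
    Tendsto (fun n => √(lagFreq n * r) *
      ((∫ θ in (0 : ℝ)..π, h θ * f n θ) - ∫ θ in (0 : ℝ)..π, h θ * g n θ)) atTop (nhds 0) := by
  obtain ⟨A, hA⟩ := isCompact_Icc.exists_bound_of_continuousOn (s := Set.Icc 0 π) hh.continuousOn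
  have hnull : Tendsto (fun n => √r * A * C * π * (√(lagFreq n))⁻¹) atTop (nhds 0) := by
    simpa using (tendsto_inv_atTop_zero.comp
      (tendsto_sqrt_atTop.comp tendsto_lagFreq)).const_mul (√r * A * C * π)
  refine squeeze_zero_norm' ?_ hnull
  filter_upwards [hfg] with n hn
  have hle := abs_integral_mul_sub_le (hf n) (hg n) hh hA hn
  rw [norm_mul, norm_of_nonneg (sqrt_nonneg _)]
  refine (mul_le_mul_of_nonneg_left hle (sqrt_nonneg _)).trans_eq ?_
  rw [sqrt_mul (lagFreq_pos n).le, ← one_div (√(lagFreq n)), ← sqrt_div_self']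
  ring

theorem hasDerivAt_exp_mul_sq_div_two (r s : ℝ) :
    HasDerivAt (fun s => exp ((r * s) ^ 2 / 2)) (exp ((r * s) ^ 2 / 2) * (r ^ 2 * s)) s := by
  refine ((((hasDerivAt_id' s).const_mul r).fun_pow 2).div_const 2).exp.congr_deriv ?_
  push_cast
  ring

theorem mul_sin_mem_Icc {r θ : ℝ} (hr : 0 ≤ r) (hθ : θ ∈ Set.Icc 0 π) :
    r * sin θ ∈ Set.Icc 0 r :=
  ⟨mul_nonneg hr (sin_nonneg_of_mem_Icc hθ), mul_le_of_le_one_right hr (sin_le_one θ)⟩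

theorem continuous_hermiteEven (n : ℕ) : Continuous (hermiteEven n) :=
  continuous_iff_continuousAt.2 fun y => (hasDerivAt_hermiteEven n y).continuousAt

theorem continuous_hermiteOdd (n : ℕ) : Continuous (hermiteOdd n) :=
  continuous_iff_continuousAt.2 fun y => (hasDerivAt_hermiteOdd n y).continuousAt

theorem tendsto_sqrt_lagFreq_mul_lag_zero_sub {r : ℝ} (hr : 0 < r) :
    Tendsto (fun n => √(lagFreq n * r) * (π * Lag 0 (n + 1) (r ^ 2)) -
      √(2 * π) * exp (r ^ 2 / 2) * cos (lagFreq n * r - π / 4)) atTop (nhds 0) := by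
  obtain ⟨C, hC⟩ := exists_abs_hermite_sub_le r
  have hphase := (tendsto_sqrt_mul_integral_comp_sin_mul_cos_sub
    (hasDerivAt_exp_mul_sq_div_two r) (by fun_prop)).comp (tendsto_lagFreq.atTop_mul_const hr)
  have hherm := tendsto_sqrt_lagFreq_mul_integral_sub r (h := fun θ => exp ((r * sin θ) ^ 2 / 2))
    (f := fun n θ => hermiteEven n (r * sin θ)) (g := fun n θ => cos (lagFreq n * r * sin θ))
    (fun n => (continuous_hermiteEven n).comp (by fun_prop)) (by fun_prop) (by fun_prop)
    (hC.mono fun n hn θ hθ => by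
      simpa only [mul_assoc] using (hn _ (mul_sin_mem_Icc hr.le hθ)).1)
  refine (add_zero (0 : ℝ) ▸ hherm.add hphase).congr fun n => ?_
  simp only [integral_exp_mul_hermiteEven, Function.comp_apply, mul_one]
  ring

theorem tendsto_sqrt_lagFreq_mul_lag_one_sub {r : ℝ} (hr : 0 < r) :
    Tendsto (fun n => √(lagFreq n * r) * (2 / lagFreq n * (π * (r * Lag 1 n (r ^ 2)))) -
      √(2 * π) * exp (r ^ 2 / 2) * sin (lagFreq n * r - π / 4)) atTop (nhds 0) := by
  obtain ⟨C, hC⟩ := exists_abs_hermite_sub_le r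
  have hphase := (tendsto_sqrt_mul_integral_comp_sin_mul_sin_sub
    (fun s => (hasDerivAt_id' s).fun_mul (hasDerivAt_exp_mul_sq_div_two r s))
    (by fun_prop)).comp (tendsto_lagFreq.atTop_mul_const hr)
  have hherm := tendsto_sqrt_lagFreq_mul_integral_sub r
    (h := fun θ => sin θ * exp ((r * sin θ) ^ 2 / 2))
    (f := fun n θ => 2 / lagFreq n * hermiteOdd n (r * sin θ))
    (g := fun n θ => sin (lagFreq n * r * sin θ))
    (fun n => continuous_const.mul ((continuous_hermiteOdd n).comp (by fun_prop)))
    (by fun_prop) (by fun_prop)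
    (hC.mono fun n hn θ hθ => by
      simpa only [mul_assoc] using (hn _ (mul_sin_mem_Icc hr.le hθ)).2)
  refine (add_zero (0 : ℝ) ▸ hherm.add hphase).congr fun n => ?_
  simp only [mul_left_comm _ (2 / lagFreq n), intervalIntegral.integral_const_mul,
    integral_sin_mul_exp_mul_hermiteOdd, Function.comp_apply, mul_one, one_mul]
  ring

theorem lagAsymp_zero {r : ℝ} (hr : 0 < r) : LagAsymp 0 (π / 4) r := by
  have : 0 < √(2 * π) * exp (r ^ 2 / 2) := by positivity
  refine ⟨fun n => √(lagFreq n * r) * π / (√(2 * π) * exp (r ^ 2 / 2)), fun n => ?_, ?_, ?_⟩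
  · have := lagFreq_pos n
    positivity
  · refine (zero_div (√(2 * π) * exp (r ^ 2 / 2)) ▸
      (tendsto_sqrt_lagFreq_mul_lag_zero_sub hr).div_const _).congr fun n => ?_
    field_simp
  · refine (zero_div (√(2 * π) * exp (r ^ 2 / 2)) ▸
      (tendsto_sqrt_lagFreq_mul_lag_one_sub hr).div_const _).congr fun n => ?_
    rw [zero_add]
    field_simp

theorem tendsto_mul_of_tendsto_sub_of_abs_le {ε u w : ℕ → ℝ} {B : ℝ}
    (hε : Tendsto ε atTop (nhds 0)) (hu : Tendsto (fun n => u n - w n) atTop (nhds 0))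
    (hw : ∀ n, |w n| ≤ B) : Tendsto (fun n => ε n * u n) atTop (nhds 0) := by
  have hεw : Tendsto (fun n => ε n * w n) atTop (nhds 0) :=
    hε.zero_mul_isBoundedUnder_le (isBoundedUnder_of ⟨B, hw⟩)
  refine (add_zero (0 : ℝ) ▸ (mul_zero (0 : ℝ) ▸ hε.mul hu).add hεw).congr fun n => ?_
  ring

theorem tendsto_cos_sub_cos {u v : ℕ → ℝ} (h : Tendsto (fun n => u n - v n) atTop (nhds 0)) :
    Tendsto (fun n => cos (u n) - cos (v n)) atTop (nhds 0) :=
  squeeze_zero_norm (fun n => abs_cos_sub_cos_le (u n) (v n)) (by simpa using h.abs)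

theorem tendsto_sin_sub_sin {u v : ℕ → ℝ} (h : Tendsto (fun n => u n - v n) atTop (nhds 0)) :
    Tendsto (fun n => sin (u n) - sin (v n)) atTop (nhds 0) :=
  squeeze_zero_norm (fun n => abs_sin_sub_sin_le (u n) (v n)) (by simpa using h.abs)

theorem tendsto_sub_lagFreq {b : ℕ → ℝ} {K : ℝ} (hb : ∀ n, 0 ≤ b n)
    (hK : ∀ n, |b n ^ 2 - lagFreq n ^ 2| ≤ K) :
    Tendsto (fun n => b n - lagFreq n) atTop (nhds 0) := by
  refine squeeze_zero_norm (fun n => ?_) (tendsto_const_div_lagFreq K)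
  have hl := lagFreq_pos n
  rw [norm_eq_abs, le_div_iff₀ hl]
  calc |b n - lagFreq n| * lagFreq n ≤ |b n - lagFreq n| * |b n + lagFreq n| := by
        rw [abs_of_nonneg (add_nonneg (hb n) hl.le)]
        gcongr
        linarith [hb n]
    _ = |b n ^ 2 - lagFreq n ^ 2| := by
        rw [← abs_mul]
        ring_nf
    _ ≤ K := hK n

theorem tendsto_lagFreq_succ_sub : Tendsto (fun n => lagFreq (n + 1) - lagFreq n) atTop (nhds 0) :=
  tendsto_sub_lagFreq (K := 4) (fun n => (lagFreq_pos _).le) fun n => le_of_eq <| by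
    simp only [sq_lagFreq]
    push_cast
    ring_nf
    norm_num

theorem tendsto_four_mul_div_lagFreq_mul_lagFreq :
    Tendsto (fun n : ℕ => 4 * ((n : ℝ) + 2) / (lagFreq (n + 1) * lagFreq n) - 1) atTop
      (nhds 0) := by
  have hinv := tendsto_const_div_lagFreq 1
  have hlim := (tendsto_lagFreq_succ_sub.mul hinv).sub
    (((tendsto_add_atTop_iff_nat 1).2 hinv).mul hinv)
  rw [mul_zero, sub_zero] at hlim
  refine hlim.congr fun n => ?_
  have hl := lagFreq_pos n
  have hl' := lagFreq_pos (n + 1)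
  have hsq := sq_lagFreq (n + 1)
  push_cast at hsq
  field_simp
  linear_combination hsq

theorem LagAsymp.add_one {ν α r : ℝ} (hν : -1 < ν) (hr : 0 < r) (h : LagAsymp ν α r) :
    LagAsymp (ν + 1) (α + π / 2) r := by
  obtain ⟨c, hc, hcos, hsin⟩ := h
  have hcos' := (tendsto_add_atTop_iff_nat 1).2 hcos
  have hphase : Tendsto (fun n => (lagFreq (n + 1) * r - α) - (lagFreq n * r - α)) atTop
      (nhds 0) := by
    refine (zero_mul r ▸ tendsto_lagFreq_succ_sub.mul_const r).congr fun n => ?_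
    ring
  have hnew : Tendsto (fun n => c (n + 1) * (2 * r / lagFreq (n + 1)) *
      Lag (ν + 1) (n + 1) (r ^ 2) - cos (lagFreq n * r - (α + π / 2))) atTop (nhds 0) := by
    refine (add_zero (0 : ℝ) ▸ ((tendsto_add_atTop_iff_nat 1).2 hsin).add
      (tendsto_sin_sub_sin hphase)).congr fun n => ?_
    rw [← sub_sub (lagFreq n * r), cos_sub_pi_div_two]
    ring
  refine ⟨fun n => c (n + 1) * (2 * r / lagFreq (n + 1)),
    fun n => mul_pos (hc _) (div_pos (by positivity) (lagFreq_pos _)), hnew, ?_⟩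
  have hsame := tendsto_mul_of_tendsto_sub_of_abs_le
    (tendsto_const_div_lagFreq (2 * (ν + 1 - r ^ 2) / r)) hnew fun n => abs_cos_le_one _
  have hlower := tendsto_mul_of_tendsto_sub_of_abs_le
    tendsto_four_mul_div_lagFreq_mul_lagFreq hcos' fun n => abs_cos_le_one _
  have hlim := ((hsame.sub hlower).sub hcos').sub (tendsto_cos_sub_cos hphase)
  simp only [sub_zero] at hlim
  refine hlim.congr fun n => ?_
  have hl := lagFreq_pos n
  have hl' := lagFreq_pos (n + 1)
  have hrec : Lag (ν + 1 + 1) n (r ^ 2) = ((ν + 1 - r ^ 2) * Lag (ν + 1) (n + 1) (r ^ 2) -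
      (n + 2) * Lag ν (n + 2) (r ^ 2)) / r ^ 2 := by
    rw [← mul_lag_add_two hν, mul_div_cancel_left₀ _ (by positivity)]
  rw [← sub_sub (lagFreq n * r), sin_sub_pi_div_two, hrec]
  field_simp
  ring

theorem lagAsymp_half_sub_one (D : ℕ) {r : ℝ} (hr : 0 < r) :
    LagAsymp ((D + 1 : ℕ) / 2 - 1) (D * (π / 4)) r := by
  induction D using Nat.twoStepInduction with
  | zero => simpa [show (2 : ℝ)⁻¹ - 1 = -1 / 2 by norm_num] using lagAsymp_neg_half hr.le
  | one => simpa [show (1 : ℝ) + 1 = 2 by norm_num] using lagAsymp_zero hr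
  | more D ih _ =>
    have : (0 : ℝ) ≤ D := D.cast_nonneg
    convert ih.add_one (by push_cast; linarith) hr using 1 <;> push_cast <;> ring

/-- Asymptotic equality of `u` and `w` up to a positive factor depending on the index: enough to
transfer the sign of `w n` to `u n` wherever `w n` is bounded away from `0`. -/
def PosAsymp (u w : ℕ → ℝ) : Prop :=
  ∃ c : ℕ → ℝ, (∀ n, 0 < c n) ∧ Tendsto (fun n => c n * u n - w n) atTop (nhds 0)

theorem PosAsymp.neg {u w : ℕ → ℝ} (h : PosAsymp u w) : PosAsymp (-u) (-w) := by
  obtain ⟨c, hc, hlim⟩ := h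
  refine ⟨c, hc, (neg_zero (G := ℝ) ▸ hlim.neg).congr fun n => ?_⟩
  simp only [Pi.neg_apply]
  ring

theorem PosAsymp.mul {u₁ u₂ w₁ w₂ : ℕ → ℝ} {B₁ B₂ : ℝ} (h₁ : PosAsymp u₁ w₁)
    (h₂ : PosAsymp u₂ w₂) (hw₁ : ∀ n, |w₁ n| ≤ B₁) (hw₂ : ∀ n, |w₂ n| ≤ B₂) :
    PosAsymp (u₁ * u₂) (w₁ * w₂) := by
  obtain ⟨c₁, hc₁, hlim₁⟩ := h₁
  obtain ⟨c₂, hc₂, hlim₂⟩ := h₂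
  refine ⟨c₁ * c₂, fun n => mul_pos (hc₁ n) (hc₂ n), ?_⟩
  have hleft := tendsto_mul_of_tendsto_sub_of_abs_le hlim₂ hlim₁ hw₁
  have hright : Tendsto (fun n => (c₁ n * u₁ n - w₁ n) * w₂ n) atTop (nhds 0) :=
    hlim₁.zero_mul_isBoundedUnder_le (isBoundedUnder_of ⟨B₂, hw₂⟩)
  refine (add_zero (0 : ℝ) ▸ hleft.add hright).congr fun n => ?_
  simp only [Pi.mul_apply]
  ring

theorem LagAsymp.posAsymp {ν α r : ℝ} (h : LagAsymp ν α r) :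
    PosAsymp (fun n => Lag ν n (r ^ 2)) fun n => cos (2 * √n * r - α) := by
  obtain ⟨c, hc, hcos, -⟩ := h
  refine ⟨fun n => c (n - 1), fun n => hc _, (tendsto_add_atTop_iff_nat 1).1 ?_⟩
  have hfreq : Tendsto (fun n : ℕ => 2 * √(n + 1 : ℕ) - lagFreq n) atTop (nhds 0) :=
    tendsto_sub_lagFreq (K := 1) (fun n => by positivity) fun n => le_of_eq <| by
      rw [mul_pow, sq_sqrt (Nat.cast_nonneg _), sq_lagFreq]
      push_cast
      ring_nf
      norm_num
  have hphase : Tendsto (fun n : ℕ => (2 * √(n + 1 : ℕ) * r - α) - (lagFreq n * r - α)) atTop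
      (nhds 0) := by
    refine (zero_mul r ▸ hfreq.mul_const r).congr fun n => ?_
    ring
  refine (sub_zero (0 : ℝ) ▸ hcos.sub (tendsto_cos_sub_cos hphase)).congr fun n => ?_
  simp

theorem posAsymp_lagFun (D : ℕ) {r : ℝ} (hr : 0 < r) :
    PosAsymp (fun n => LagFun (D + 1) n r)
      fun n => cos (2 * √n * (√(2 * π) * r) - D * (π / 4)) := by
  obtain ⟨c, hc, hlim⟩ := (lagAsymp_half_sub_one D (r := √(2 * π) * r) (by positivity)).posAsymp
  refine ⟨fun n => c n / exp (-π * r ^ 2), fun n => div_pos (hc n) (exp_pos _),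
    hlim.congr fun n => ?_⟩
  simp only [LagFun, mul_pow, sq_sqrt two_pi_pos.le]
  field_simp

/-! ### Averages along `c √n` -/

theorem uniformContinuous_of_periodic {E : Type*} [UniformSpace E] {f : ℝ → E} {T : ℝ}
    (hT : 0 < T) (hf : Continuous f) (hper : Function.Periodic f T) : UniformContinuous f := by
  have : Fact (0 < T) := ⟨hT⟩
  have hlift : Continuous (hper.lift : AddCircle T → E) := continuous_quot_lift _ hf
  exact (CompactSpace.uniformContinuous_of_continuous hlift).comp
    (uniformContinuous_addMonoidHom_of_continuous
      (f := QuotientAddGroup.mk' (AddSubgroup.zmultiples T)) continuous_quot_mk)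

theorem exists_abs_primitive_le {f : ℝ → ℝ} (hf : Continuous f) (hper : Function.Periodic f 1)
    (hint : ∫ x in (0 : ℝ)..1, f x = 0) : ∃ B, ∀ t, |∫ x in (0 : ℝ)..t, f x| ≤ B := by
  have hcont : Continuous fun t => ∫ x in (0 : ℝ)..t, f x :=
    intervalIntegral.continuous_primitive hf.intervalIntegrable 0
  have hprim : Function.Periodic (fun t => ∫ x in (0 : ℝ)..t, f x) 1 := fun t => by
    simpa [hint] using hper.intervalIntegral_add_eq_add 0 t hf.intervalIntegrable
  obtain ⟨B, hB⟩ := (hprim.isBounded_of_continuous one_ne_zero hcont).exists_norm_le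
  exact ⟨B, fun t => hB _ ⟨t, rfl⟩⟩

theorem hasDerivAt_sqrt_mul_comp_sqrt {f F : ℝ → ℝ} (hF : ∀ t, HasDerivAt F (f t) t) {c u : ℝ}
    (hc : 0 < c) (hu : 0 < u) :
    HasDerivAt (fun u => 2 * √u / c * F (c * √u)) (f (c * √u) + F (c * √u) / (c * √u)) u := by
  have hsqrt := (hasDerivAt_id' u).sqrt hu.ne'
  have hcomp : HasDerivAt (fun u => F (c * √u)) (f (c * √u) * (c * (1 / (2 * √u)))) u :=
    HasDerivAt.comp (h := fun u => c * √u) u (hF (c * √u)) (hsqrt.const_mul c)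
  refine (((hsqrt.const_mul 2).div_const c).fun_mul hcomp).congr_deriv ?_
  have := sqrt_pos.2 hu
  field_simp
  ring

theorem sqrt_sub_sqrt_le {n u : ℝ} (hn : 0 < n) (hu : u ∈ Set.Icc n (n + 1)) :
    √u - √n ≤ 1 / √n := by
  have hsqrt := sqrt_pos.2 hn
  rw [le_div_iff₀ hsqrt]
  nlinarith [sq_sqrt hn.le, sq_sqrt (hn.le.trans hu.1), sqrt_le_sqrt hu.1, hu.2]

theorem eventually_abs_comp_sqrt_sub_le {f : ℝ → ℝ} (hf : UniformContinuous f) {c ε : ℝ}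
    (hc : 0 < c) (hε : 0 < ε) : ∀ᶠ n : ℕ in atTop, ∀ u ∈ Set.Icc (n : ℝ) (n + 1),
      |f (c * √u) - f (c * √n)| ≤ ε := by
  obtain ⟨δ, hδ, hfδ⟩ := Metric.uniformContinuous_iff.1 hf ε hε
  have hsqrt : Tendsto (fun n : ℕ => c * (1 / √n)) atTop (nhds 0) := by
    simpa using (tendsto_inv_atTop_zero.comp
      (tendsto_sqrt_atTop.comp tendsto_natCast_atTop_atTop)).const_mul c
  filter_upwards [hsqrt.eventually_lt_const hδ, eventually_gt_atTop 0] with n hn hn0 u hu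
  refine (hfδ (lt_of_le_of_lt ?_ hn)).le
  rw [dist_eq, ← mul_sub, abs_mul, abs_of_pos hc, abs_of_nonneg (sub_nonneg.2 (sqrt_le_sqrt hu.1))]
  exact mul_le_mul_of_nonneg_left (sqrt_sub_sqrt_le (by positivity) hu) hc.le

theorem tendsto_sub_sub_of_hasDerivAt {K k : ℝ → ℝ} {a : ℕ → ℝ}
    (hK : ∀ u > 0, HasDerivAt K (k u) u)
    (ha : ∀ ε > 0, ∀ᶠ n : ℕ in atTop, ∀ u ∈ Set.Icc (n : ℝ) (n + 1), |k u - a n| ≤ ε) :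
    Tendsto (fun n : ℕ => a n - (K (n + 1 : ℕ) - K n)) atTop (nhds 0) := by
  refine Metric.tendsto_atTop'.2 fun ε hε => ?_
  obtain ⟨N, hN⟩ := eventually_atTop.1 (ha (ε / 2) (half_pos hε))
  refine ⟨N, fun n hn => ?_⟩
  have hn0 : (0 : ℝ) < n := by exact_mod_cast (Nat.zero_le N).trans_lt hn
  have hmv := (convex_Icc (n : ℝ) (n + 1)).norm_image_sub_le_of_norm_hasDerivWithin_le
    (f := fun u => K u - u * a n) (f' := fun u => k u - a n) (x := n) (y := n + 1) (C := ε / 2)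
    (fun u hu => ((hK u (hn0.trans_le hu.1)).sub
      (hasDerivAt_mul_const (a n))).hasDerivWithinAt) (hN n hn.le)
    ⟨le_rfl, by linarith⟩ ⟨by linarith, le_rfl⟩
  rw [add_sub_cancel_left, norm_one, mul_one] at hmv
  rw [dist_eq, sub_zero, abs_sub_comm, Nat.cast_succ]
  refine lt_of_le_of_lt (le_of_eq_of_le ?_ hmv) (half_lt_self hε)
  rw [norm_eq_abs]
  ring_nf

theorem tendsto_average_of_tendsto_sub_sub {a K : ℕ → ℝ}
    (ha : Tendsto (fun n => a n - (K (n + 1) - K n)) atTop (nhds 0))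
    (hK : Tendsto (fun N : ℕ => K N / N) atTop (nhds 0)) :
    Tendsto (fun N : ℕ => (∑ n ∈ Finset.range N, a n) / N) atTop (nhds 0) := by
  have hK0 : Tendsto (fun N : ℕ => K 0 / N) atTop (nhds 0) :=
    tendsto_const_nhds.div_atTop tendsto_natCast_atTop_atTop
  have hlim := ha.cesaro.add (hK.sub hK0)
  rw [sub_zero, add_zero] at hlim
  refine hlim.congr fun N => ?_
  rw [Finset.sum_sub_distrib, Finset.sum_range_sub]
  ring

theorem tendsto_average_comp_sqrt_of_integral_eq_zero {f : ℝ → ℝ} (hf : Continuous f)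
    (hper : Function.Periodic f 1) (hint : ∫ x in (0 : ℝ)..1, f x = 0) {c : ℝ} (hc : 0 < c) :
    Tendsto (fun N : ℕ => (∑ n ∈ Finset.range N, f (c * √n)) / N) atTop (nhds 0) := by
  obtain ⟨B, hB⟩ := exists_abs_primitive_le hf hper hint
  have hinv (C : ℝ) : Tendsto (fun n : ℕ => C / √n) atTop (nhds 0) :=
    tendsto_const_nhds.div_atTop (tendsto_sqrt_atTop.comp tendsto_natCast_atTop_atTop)
  set F : ℝ → ℝ := fun t => ∫ x in (0 : ℝ)..t, f x
  refine tendsto_average_of_tendsto_sub_sub (K := fun n => 2 * √n / c * F (c * √n))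
    (tendsto_sub_sub_of_hasDerivAt (fun u hu => hasDerivAt_sqrt_mul_comp_sqrt
      (fun t => (hf.integral_hasStrictDerivAt 0 t).hasDerivAt) hc hu) fun ε hε => ?_)
    (squeeze_zero_norm (fun N => ?_) (hinv (2 / c * B)))
  · filter_upwards [eventually_abs_comp_sqrt_sub_le (uniformContinuous_of_periodic one_pos hf hper)
      hc (half_pos hε), (hinv (B / c)).eventually_le_const (half_pos hε), eventually_gt_atTop 0]
      with n hfn hBn hn u hu
    have hn0 : (0 : ℝ) < √n := by positivity
    have hBu : |F (c * √u) / (c * √u)| ≤ ε / 2 := by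
      have hu0 := hn0.trans_le (sqrt_le_sqrt hu.1)
      rw [abs_div, abs_of_pos (mul_pos hc hu0)]
      refine (div_le_div₀ ((abs_nonneg _).trans (hB 0)) (hB _) (mul_pos hc hn0) ?_).trans
        (div_div B c √n ▸ hBn)
      gcongr
      exact hu.1
    rw [add_sub_right_comm]
    exact (abs_add_le _ _).trans (by linarith [hfn u hu])
  · have hsplit : 2 * √N / c * F (c * √N) / N = 2 / c * F (c * √N) * (√N / N) := by ring
    rw [hsplit, sqrt_div_self', mul_one_div, norm_eq_abs, abs_div, abs_mul,
      abs_of_pos (by positivity : 0 < 2 / c), abs_of_nonneg (sqrt_nonneg (N : ℝ))]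
    gcongr
    exact hB _

theorem tendsto_average_comp_sqrt {f : ℝ → ℝ} (hf : Continuous f) (hper : Function.Periodic f 1)
    {c : ℝ} (hc : 0 < c) :
    Tendsto (fun N : ℕ => (∑ n ∈ Finset.range N, f (c * √n)) / N) atTop
      (nhds (∫ x in (0 : ℝ)..1, f x)) := by
  have hmean := tendsto_average_comp_sqrt_of_integral_eq_zero
    (f := fun x => f x - ∫ x in (0 : ℝ)..1, f x) (by fun_prop) (fun x => by simp [hper x])
    (by simp [intervalIntegral.integral_sub (hf.intervalIntegrable 0 1)]) hc
  refine (zero_add (∫ x in (0 : ℝ)..1, f x) ▸ hmean.add_const _).congr' ?_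
  filter_upwards [eventually_gt_atTop 0] with N hN
  rw [Finset.sum_sub_distrib, Finset.sum_const, Finset.card_range, nsmul_eq_mul]
  field_simp
  ring

/-! ### Densities of sign patterns -/

/-- A continuous minorant of the indicator function of the positive half-line, which vanishes up to
`1 / k` and equals `1` from `2 / k` on. -/
noncomputable def posRamp (k : ℕ) (y : ℝ) : ℝ := max 0 (min 1 (k * y - 1))

theorem continuous_posRamp (k : ℕ) : Continuous (posRamp k) := by
  unfold posRamp
  fun_prop

theorem abs_posRamp_le_one (k : ℕ) (y : ℝ) : |posRamp k y| ≤ 1 := by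
  rw [posRamp, abs_of_nonneg (le_max_left _ _)]
  exact max_le zero_le_one (min_le_left _ _)

theorem posRamp_eq_zero {k : ℕ} {y : ℝ} (h : k * y ≤ 1) : posRamp k y = 0 :=
  max_eq_left ((min_le_right _ _).trans (sub_nonpos.2 h))

theorem tendsto_posRamp (y : ℝ) :
    Tendsto (fun k => posRamp k y) atTop (nhds (if 0 < y then 1 else 0)) := by
  split_ifs with hy
  · refine tendsto_const_nhds.congr' ?_
    filter_upwards [(tendsto_natCast_atTop_atTop.atTop_mul_const hy).eventually_ge_atTop 2]
      with k hk
    rw [posRamp, min_eq_left (by linarith), max_eq_right zero_le_one]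
  · refine tendsto_const_nhds.congr fun k => (posRamp_eq_zero ?_).symm
    linarith [mul_nonpos_of_nonneg_of_nonpos (k.cast_nonneg (α := ℝ)) (not_lt.1 hy)]

theorem tendsto_integral_posRamp_comp {w : ℝ → ℝ} (hw : Continuous w) :
    Tendsto (fun k => ∫ x in (0 : ℝ)..1, posRamp k (w x)) atTop
      (nhds (∫ x in (0 : ℝ)..1, if 0 < w x then 1 else 0)) :=
  intervalIntegral.tendsto_integral_filter_of_dominated_convergence (fun _ => 1)
    (.of_forall fun k => ((continuous_posRamp k).comp hw).aestronglyMeasurable)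
    (.of_forall fun k => .of_forall fun x _ => abs_posRamp_le_one k (w x)) (by simp)
    (.of_forall fun x _ => tendsto_posRamp (w x))

theorem eventually_lt_average_of_eventually_le {a b : ℕ → ℝ} {x L : ℝ}
    (hab : ∀ᶠ n in atTop, a n ≤ b n)
    (ha : Tendsto (fun N : ℕ => (∑ n ∈ Finset.range N, a n) / N) atTop (nhds L)) (hx : x < L) :
    ∀ᶠ N : ℕ in atTop, x < (∑ n ∈ Finset.range N, b n) / N := by
  have hexcess : Tendsto (fun n => max 0 (a n - b n)) atTop (nhds 0) :=
    tendsto_const_nhds.congr' (hab.mono fun n hn => (max_eq_left (sub_nonpos.2 hn)).symm)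
  filter_upwards [(sub_zero L ▸ ha.sub hexcess.cesaro).eventually_const_lt hx] with N hN
  refine hN.trans_le ?_
  rw [inv_mul_eq_div, ← sub_div, ← Finset.sum_sub_distrib]
  gcongr with n
  linarith [le_max_right 0 (a n - b n)]

theorem PosAsymp.eventually_lt_density_pos {u : ℕ → ℝ} {w : ℝ → ℝ} {c x : ℝ}
    (hu : PosAsymp u fun n => w (c * √n)) (hw : Continuous w) (hper : Function.Periodic w 1)
    (hc : 0 < c) (hx : x < ∫ x in (0 : ℝ)..1, if 0 < w x then 1 else 0) :
    ∀ᶠ N : ℕ in atTop, x < ((Finset.range N).filter fun n => 0 < u n).card / N := by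
  obtain ⟨a, ha, hlim⟩ := hu
  obtain ⟨k, hk, hk0⟩ := (((tendsto_integral_posRamp_comp hw).eventually_const_lt hx).and
    (eventually_gt_atTop 0)).exists
  have hle : ∀ᶠ n : ℕ in atTop, posRamp k (w (c * √n)) ≤ if 0 < u n then 1 else 0 := by
    have hk0' : (0 : ℝ) < k := Nat.cast_pos.2 hk0
    filter_upwards [hlim.eventually_const_lt (neg_lt_zero.2 (one_div_pos.2 hk0'))] with n hn
    split_ifs with hun
    · exact (le_abs_self _).trans (abs_posRamp_le_one _ _)
    · refine (posRamp_eq_zero ?_).le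
      have hau := mul_nonpos_of_nonneg_of_nonpos (ha n).le (not_lt.1 hun)
      rw [mul_comm, ← le_div_iff₀ hk0']
      linarith
  simpa only [Finset.sum_boole] using eventually_lt_average_of_eventually_le hle
    (tendsto_average_comp_sqrt ((continuous_posRamp k).comp hw) (fun x => by simp [hper x]) hc) hk

theorem integral_ite_pos_add_integral_ite_neg {w : ℝ → ℝ} (hw : Continuous w)
    (hne : ∀ᵐ x, w x ≠ 0) :
    (∫ x in (0 : ℝ)..1, if 0 < w x then (1 : ℝ) else 0) +
      ∫ x in (0 : ℝ)..1, (if 0 < (-w) x then (1 : ℝ) else 0) = 1 := by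
  have hmeas {v : ℝ → ℝ} (hv : Continuous v) :
      IntervalIntegrable (fun x => if 0 < v x then (1 : ℝ) else 0) volume 0 1 := by
    refine (intervalIntegrable_const (c := (1 : ℝ))).mono_fun (Measurable.ite
      (measurableSet_lt measurable_const hv.measurable) measurable_const
      measurable_const).aestronglyMeasurable (.of_forall fun x => ?_)
    dsimp only
    split_ifs <;> simp
  rw [← intervalIntegral.integral_add (hmeas hw) (hmeas hw.neg)]
  refine (intervalIntegral.integral_congr_ae (g := fun _ => (1 : ℝ)) ?_).trans (by simp)
  filter_upwards [hne] with x hx _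
  rcases hx.lt_or_gt with h | h <;> simp [h, h.le]

theorem PosAsymp.tendsto_density {u : ℕ → ℝ} {w : ℝ → ℝ} {c : ℝ} {P : ℕ → Prop}
    (hu : PosAsymp u fun n => w (c * √n)) (hw : Continuous w) (hper : Function.Periodic w 1)
    (hne : ∀ᵐ x, w x ≠ 0) (hc : 0 < c) (hpos : ∀ n, 0 < u n → P n)
    (hneg : ∀ n, u n < 0 → ¬P n) :
    Tendsto (fun N : ℕ => (((Finset.range N).filter P).card : ℝ) / N) atTop
      (nhds (∫ x in (0 : ℝ)..1, if 0 < w x then 1 else 0)) := by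
  have hsum := integral_ite_pos_add_integral_ite_neg hw hne
  refine tendsto_order.2 ⟨fun a ha => ?_, fun b hb => ?_⟩
  · filter_upwards [hu.eventually_lt_density_pos hw hper hc ha] with N hN
    refine hN.trans_le ?_
    gcongr with n _
    exact hpos n
  · have hu' : PosAsymp (-u) fun n => (-w) (c * √n) := hu.neg
    filter_upwards [hu'.eventually_lt_density_pos (x := 1 - b) hw.neg
      (fun x => by simp [hper x]) hc (by linarith), eventually_gt_atTop 0] with N hN hN0
    have hnot : 1 - b < ((Finset.range N).filter fun n => ¬P n).card / N := by
      refine hN.trans_le ?_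
      gcongr with n _
      exact fun hn => hneg n (neg_pos.1 hn)
    have hcompl : (((Finset.range N).filter P).card : ℝ) / N +
        ((Finset.range N).filter fun n => ¬P n).card / N = 1 := by
      rw [← add_div, ← Nat.cast_add, Finset.card_filter_add_card_filter_not, Finset.card_range,
        div_self (Nat.cast_ne_zero.2 hN0.ne')]
    linarith

theorem sgn_eq_coe_sign (t : ℝ) : sgn t = SignType.sign t := by
  rcases lt_trichotomy t 0 with h | rfl | h
  · simp [sgn, h, h.not_gt]
  · simp [sgn]
  · simp [sgn, h]

theorem sgn_mul (a b : ℝ) : sgn (a * b) = sgn a * sgn b := by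
  simp only [sgn_eq_coe_sign, sign_mul, SignType.coe_mul]

theorem sgn_eq_of_mul_pos {a b : ℝ} (h : 0 < a * b) : sgn a = sgn b := by
  rcases mul_pos_iff.1 h with ⟨ha, hb⟩ | ⟨ha, hb⟩ <;> simp [sgn_eq_coe_sign, ha, hb]

theorem sgn_ne_of_mul_neg {a b : ℝ} (h : a * b < 0) : sgn a ≠ sgn b := by
  rcases mul_neg_iff.1 h with ⟨ha, hb⟩ | ⟨ha, hb⟩ <;> norm_num [sgn_eq_coe_sign, ha, hb]

theorem ite_pos_eq_one_add_sgn_div_two {t : ℝ} (ht : t ≠ 0) :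
    (if 0 < t then 1 else 0) = (1 + sgn t) / 2 := by
  rcases ht.lt_or_gt with h | h
  · simp [sgn, h, h.not_gt]
  · simp [sgn, h]

theorem PosAsymp.tendsto_density_sgn_eq {u v : ℕ → ℝ} {f g : ℝ → ℝ} {c : ℝ}
    (hu : PosAsymp u fun n => f (c * √n)) (hv : PosAsymp v fun n => g (c * √n))
    (hf : Continuous f) (hg : Continuous g) (hfper : Function.Periodic f 1)
    (hgper : Function.Periodic g 1) (hne : ∀ᵐ x, f x * g x ≠ 0) (hc : 0 < c) :
    Tendsto (fun N : ℕ => (((Finset.range N).filter fun n => sgn (u n) = sgn (v n)).card : ℝ) / N)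
      atTop (nhds (∫ x in (0 : ℝ)..1, if 0 < f x * g x then 1 else 0)) := by
  obtain ⟨A, hA⟩ := (hfper.isBounded_of_continuous one_ne_zero hf).exists_norm_le
  obtain ⟨B, hB⟩ := (hgper.isBounded_of_continuous one_ne_zero hg).exists_norm_le
  have hmul : PosAsymp (u * v) fun n => (f * g) (c * √n) :=
    hu.mul hv (fun n => hA _ ⟨_, rfl⟩) fun n => hB _ ⟨_, rfl⟩
  exact hmul.tendsto_density (hf.mul hg) (hfper.mul hgper) hne hc
    (fun n => sgn_eq_of_mul_pos) fun n => sgn_ne_of_mul_neg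

/-! ### Square waves -/

theorem sum_range_int_add_ediv {p : ℕ} (hp : 0 < p) (n : ℤ) :
    ∑ j ∈ Finset.range p, (n + j) / (p : ℤ) = n := by
  have hp0 : (p : ℤ) ≠ 0 := Nat.cast_ne_zero.2 hp.ne'
  have hstep (m : ℤ) : ∑ j ∈ Finset.range p, (m + 1 + j) / (p : ℤ) =
      ∑ j ∈ Finset.range p, (m + j) / (p : ℤ) + 1 := by
    have hsucc := Finset.sum_range_succ' (fun j : ℕ => (m + j) / (p : ℤ)) p
    rw [Finset.sum_range_succ, Nat.cast_zero, add_zero, Int.add_ediv_of_dvd_right (dvd_refl _),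
      Int.ediv_self hp0] at hsucc
    simp only [Nat.cast_succ, add_assoc, add_comm (1 : ℤ)] at hsucc ⊢
    linarith
  induction n using Int.induction_on with
  | zero =>
    refine Finset.sum_eq_zero fun j hj => ?_
    rw [zero_add]
    exact Int.ediv_eq_zero_of_lt (Int.natCast_nonneg j) (Nat.cast_lt.2 (Finset.mem_range.1 hj))
  | succ n ih => rw [hstep, ih]
  | pred n ih =>
    have h := hstep (-(n : ℤ) - 1)
    rw [sub_add_cancel, ih] at h
    linarith

theorem sum_range_floor_add_div {p : ℕ} (hp : 0 < p) (x : ℝ) :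
    ∑ j ∈ Finset.range p, ⌊x + j / p⌋ = ⌊p * x⌋ := by
  have hp0 : (p : ℝ) ≠ 0 := Nat.cast_ne_zero.2 hp.ne'
  rw [← sum_range_int_add_ediv hp ⌊p * x⌋]
  refine Finset.sum_congr rfl fun j _ => ?_
  rw [← Int.floor_add_natCast, ← Int.floor_div_natCast]
  congr 1
  field_simp

/-- The square wave of period one: it equals `1` on `[0, 1/2)` and `-1` on `[1/2, 1)`. Writing it
in terms of floors turns Hermite's identity into a formula for its averages. -/
noncomputable def sqWave (x : ℝ) : ℝ := 1 + 2 * ⌊x⌋ - 2 * ⌊x + 1 / 2⌋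

theorem antiperiodic_sqWave : Function.Antiperiodic sqWave (1 / 2) := fun x => by
  rw [sqWave, sqWave, add_assoc, add_halves, Int.floor_add_one]
  push_cast
  ring

theorem periodic_sqWave : Function.Periodic sqWave 1 := by
  simpa using antiperiodic_sqWave.periodic_two_mul

theorem sqWave_add_int_div_two (x : ℝ) (k : ℤ) : sqWave (x + k / 2) = (-1) ^ k * sqWave x := by
  rw [← mul_one_div (k : ℝ), antiperiodic_sqWave.add_int_mul_eq, Int.cast_negOnePow]

theorem sqWave_eq_ite (x : ℝ) : sqWave x = if Int.fract x < 1 / 2 then 1 else -1 := by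
  have h0 := Int.fract_nonneg x
  have h1 := Int.fract_lt_one x
  rw [← periodic_sqWave.sub_int_mul_eq ⌊x⌋, mul_one, Int.self_sub_floor, sqWave, Int.floor_fract]
  split_ifs with h
  · rw [Int.floor_eq_zero_iff.2 ⟨by linarith, by linarith⟩]
    simp
  · rw [Int.floor_eq_iff (z := 1) |>.2 ⟨by push_cast; linarith, by push_cast; linarith⟩]
    norm_num

theorem sqWave_mul_self (x : ℝ) : sqWave x * sqWave x = 1 := by
  rw [sqWave_eq_ite]
  split_ifs <;> norm_num

theorem abs_sqWave (x : ℝ) : |sqWave x| = 1 := by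
  rw [sqWave_eq_ite]
  split_ifs <;> norm_num

theorem measurable_sqWave : Measurable sqWave := by
  unfold sqWave
  fun_prop

theorem sqWave_eq_sgn_sin {x : ℝ} (h : sin (2 * π * x) ≠ 0) :
    sqWave x = sgn (sin (2 * π * x)) := by
  have h0 := Int.fract_nonneg x
  have h1 := Int.fract_lt_one x
  have hfract : sin (2 * π * x) = sin (2 * π * Int.fract x) := by
    rw [Int.fract, mul_sub, mul_comm _ (⌊x⌋ : ℝ), sin_sub_int_mul_two_pi]
  rw [hfract] at h ⊢
  rw [sqWave_eq_ite]
  split_ifs with hx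
  · have hsin : 0 ≤ sin (2 * π * Int.fract x) :=
      sin_nonneg_of_nonneg_of_le_pi (by positivity) (by nlinarith [pi_pos])
    rw [sgn, if_pos (hsin.lt_of_ne' h)]
  · have hsin : 0 ≤ sin (2 * π * Int.fract x - π) :=
      sin_nonneg_of_nonneg_of_le_pi (by nlinarith [pi_pos]) (by nlinarith [pi_pos])
    rw [sin_sub_pi, neg_nonneg] at hsin
    rw [sgn, if_neg hsin.not_gt, if_pos (hsin.lt_of_ne h)]

theorem sum_range_sqWave_add_div {p : ℕ} (hp : 0 < p) (x : ℝ) :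
    ∑ j ∈ Finset.range p, sqWave (x + j / p) = p + 2 * ⌊p * x⌋ - 2 * ⌊p * x + p / 2⌋ := by
  have hhalf : (p : ℝ) * x + p / 2 = p * (x + 1 / 2) := by ring
  rw [hhalf, ← sum_range_floor_add_div hp, ← sum_range_floor_add_div hp]
  simp only [sqWave, Finset.sum_sub_distrib, Finset.sum_add_distrib, Finset.mul_sum, Int.cast_sum,
    add_right_comm x (1 / 2)]
  simp

theorem sum_range_sqWave_add_div_of_even {p : ℕ} (hp0 : 0 < p) (hp : Even p) (x : ℝ) :
    ∑ j ∈ Finset.range p, sqWave (x + j / p) = 0 := by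
  obtain ⟨m, rfl⟩ := hp
  rw [sum_range_sqWave_add_div hp0]
  simp only [Nat.cast_add, add_self_div_two, Int.floor_add_natCast]
  push_cast
  ring

theorem sum_range_sqWave_add_div_of_odd {p : ℕ} (hp : Odd p) (x : ℝ) :
    ∑ j ∈ Finset.range p, sqWave (x + j / p) = sqWave (p * x) := by
  rw [sum_range_sqWave_add_div hp.pos]
  obtain ⟨m, hm⟩ := hp
  have hhalf : (p : ℝ) / 2 = 1 / 2 + m := by
    rw [hm]
    push_cast
    ring
  rw [sqWave, hhalf, ← add_assoc, Int.floor_add_natCast, hm]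
  push_cast
  ring

theorem sum_range_comp_mul_of_coprime {M : Type*} [AddCommMonoid M] {p q : ℕ} (hp : 0 < p)
    (hpq : p.Coprime q) {g : ℕ → M} (hg : Function.Periodic g p) :
    ∑ j ∈ Finset.range p, g (q * j) = ∑ j ∈ Finset.range p, g j := by
  have hmaps : ∀ j ∈ Finset.range p, q * j % p ∈ Finset.range p := fun j _ =>
    Finset.mem_range.2 (Nat.mod_lt _ hp)
  have hinj : Set.InjOn (fun j => q * j % p) (Finset.range p : Set ℕ) := by
    intro i hi j hj hij
    have hmod : q * i ≡ q * j [MOD p] := hij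
    exact (Nat.ModEq.cancel_left_of_coprime hpq hmod).eq_of_lt_of_lt
      (Finset.mem_range.1 hi) (Finset.mem_range.1 hj)
  exact Finset.sum_nbij _ hmaps hinj (Finset.surjOn_of_injOn_of_card_le _ hmaps hinj le_rfl)
    fun j _ => (hg.map_mod_nat _).symm

theorem integral_comp_add_of_periodic {f : ℝ → ℝ} (hf : Function.Periodic f 1) (t : ℝ) :
    ∫ x in (0 : ℝ)..1, f (x + t) = ∫ x in (0 : ℝ)..1, f x := by
  rw [intervalIntegral.integral_comp_add_right, zero_add, add_comm 1 t,
    hf.intervalIntegral_add_eq t 0, zero_add]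

theorem integral_comp_natCast_mul_of_periodic {f : ℝ → ℝ} (hf : Function.Periodic f 1)
    (hint : ∀ a b, IntervalIntegrable f volume a b) {m : ℕ} (hm : 0 < m) :
    ∫ x in (0 : ℝ)..1, f (m * x) = ∫ x in (0 : ℝ)..1, f x := by
  have hm0 : (m : ℝ) ≠ 0 := Nat.cast_ne_zero.2 hm.ne'
  have hsum := hf.intervalIntegral_add_zsmul_eq m 0 hint
  simp only [zero_add, zsmul_eq_mul, Int.cast_natCast, mul_one] at hsum
  rw [intervalIntegral.integral_comp_mul_left _ hm0, mul_zero, mul_one, hsum, smul_eq_mul,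
    inv_mul_cancel_left₀ hm0]

theorem natCast_mul_integral_mul_of_coprime {f g : ℝ → ℝ} (hf : Function.Periodic f 1)
    (hg : Function.Periodic g 1) {p q : ℕ} (hp : 0 < p) (hpq : p.Coprime q)
    (hint : ∀ a b, IntervalIntegrable (fun x => f (p * x) * g (q * x)) volume a b) :
    p * ∫ x in (0 : ℝ)..1, f (p * x) * g (q * x) =
      ∫ x in (0 : ℝ)..1, f (p * x) * ∑ j ∈ Finset.range p, g (q * x + j / p) := by
  have hp0 : (p : ℝ) ≠ 0 := Nat.cast_ne_zero.2 hp.ne'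
  have hf' (m : ℕ) (x : ℝ) : f (x + m) = f x := by simpa using hf.nat_mul m x
  have hg' (m : ℕ) (x : ℝ) : g (x + m) = g x := by simpa using hg.nat_mul m x
  have hper : Function.Periodic (fun x => f (p * x) * g (q * x)) 1 := fun x => by
    simp only [mul_add, mul_one, hf', hg']
  have hperj (x : ℝ) : Function.Periodic (fun j : ℕ => g (q * x + j / p)) p := fun j => by
    simpa [add_div, div_self hp0, ← add_assoc] using hg _
  have hshift (j : ℕ) (x : ℝ) : f (p * (x + j / p)) * g (q * (x + j / p)) =
      f (p * x) * g (q * x + (q * j : ℕ) / p) := by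
    rw [mul_add (p : ℝ), mul_div_cancel₀ _ hp0, hf', mul_add, Nat.cast_mul, mul_div_assoc]
  calc p * ∫ x in (0 : ℝ)..1, f (p * x) * g (q * x)
    _ = ∑ j ∈ Finset.range p, ∫ x in (0 : ℝ)..1, f (p * (x + j / p)) * g (q * (x + j / p)) := by
      simp_rw [integral_comp_add_of_periodic hper]
      simp
    _ = ∫ x in (0 : ℝ)..1, ∑ j ∈ Finset.range p, f (p * (x + j / p)) * g (q * (x + j / p)) := by
      rw [intervalIntegral.integral_finsetSum fun j _ => ?_]
      simpa using (hint (0 + j / p) (1 + j / p)).comp_add_right (j / p : ℝ)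
    _ = ∫ x in (0 : ℝ)..1, f (p * x) * ∑ j ∈ Finset.range p, g (q * x + j / p) := by
      simp only [hshift, ← Finset.mul_sum,
        sum_range_comp_mul_of_coprime hp hpq (hperj _)]

theorem intervalIntegrable_sqWave_mul_sqWave {f g : ℝ → ℝ} (hf : Measurable f) (hg : Measurable g)
    (a b : ℝ) : IntervalIntegrable (fun x => sqWave (f x) * sqWave (g x)) volume a b :=
  (intervalIntegrable_const (c := (1 : ℝ))).mono_fun
    ((measurable_sqWave.comp hf).mul (measurable_sqWave.comp hg)).aestronglyMeasurable
    (.of_forall fun x => by simp [abs_sqWave])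

theorem integral_sqWave_mul_sqWave_of_even {p q : ℕ} (hp0 : 0 < p) (hp : Even p)
    (hpq : p.Coprime q) (a b : ℝ) :
    ∫ x in (0 : ℝ)..1, sqWave (p * x + a) * sqWave (q * x + b) = 0 := by
  have havg := natCast_mul_integral_mul_of_coprime (periodic_sqWave.add_const a)
    (periodic_sqWave.add_const b) hp0 hpq fun _ _ =>
      intervalIntegrable_sqWave_mul_sqWave (by fun_prop) (by fun_prop) _ _
  simp only [add_right_comm _ _ b, sum_range_sqWave_add_div_of_even hp0 hp, mul_zero,
    intervalIntegral.integral_zero] at havg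
  exact (mul_eq_zero.1 havg).resolve_left (Nat.cast_ne_zero.2 hp0.ne')

theorem natCast_mul_integral_sqWave_mul_sqWave {p q : ℕ} (hp : Odd p) (hpq : p.Coprime q)
    (k : ℕ) (a b : ℝ) :
    p * ∫ x in (0 : ℝ)..1, sqWave (k * (p * x) + a) * sqWave (q * x + b) =
      ∫ x in (0 : ℝ)..1, sqWave (k * (p * x) + a) * sqWave (p * (q * x + b)) := by
  have hper : Function.Periodic (fun x => sqWave (k * x + a)) 1 := fun x => by
    simpa only [mul_add, add_right_comm, mul_one] using periodic_sqWave.nat_mul k (k * x + a)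
  rw [natCast_mul_integral_mul_of_coprime hper (periodic_sqWave.add_const b) hp.pos hpq fun _ _ =>
    intervalIntegrable_sqWave_mul_sqWave (by fun_prop) (by fun_prop) _ _]
  simp only [add_right_comm _ _ b, sum_range_sqWave_add_div_of_odd hp]

theorem mul_mul_integral_sqWave_mul_sqWave_of_odd {p q : ℕ} (hp : Odd p) (hq : Odd q)
    (hpq : p.Coprime q) (a b : ℝ) :
    p * q * ∫ x in (0 : ℝ)..1, sqWave (p * x + a) * sqWave (q * x + b) =
      ∫ x in (0 : ℝ)..1, sqWave (x + (q * a - p * b)) * sqWave x := by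
  have hp' := natCast_mul_integral_sqWave_mul_sqWave hp hpq 1 a b
  have hq' := natCast_mul_integral_sqWave_mul_sqWave hq hpq.symm p (p * b) a
  have hper : Function.Periodic (fun x => sqWave (x + q * a) * sqWave (x + p * b)) 1 :=
    (periodic_sqWave.add_const _).mul (periodic_sqWave.add_const _)
  have hper' : Function.Periodic (fun x => sqWave (x + (q * a - p * b)) * sqWave x) 1 :=
    (periodic_sqWave.add_const _).mul periodic_sqWave
  simp only [Nat.cast_one, one_mul] at hp'
  calc p * q * ∫ x in (0 : ℝ)..1, sqWave (p * x + a) * sqWave (q * x + b)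
    _ = q * ∫ x in (0 : ℝ)..1, sqWave (p * (q * x) + p * b) * sqWave (p * x + a) := by
      rw [mul_comm (p : ℝ), mul_assoc, hp']
      simp only [mul_add, mul_comm (sqWave (p * _ + a))]
    _ = ∫ x in (0 : ℝ)..1, sqWave ((p * q : ℕ) * x + q * a) * sqWave ((p * q : ℕ) * x + p * b) := by
      rw [hq']
      push_cast
      simp_rw [mul_comm (sqWave (p * (q * _) + _)), mul_add, ← mul_assoc, mul_comm (q : ℝ)]
    _ = ∫ x in (0 : ℝ)..1, sqWave (x + q * a) * sqWave (x + p * b) :=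
      integral_comp_natCast_mul_of_periodic hper (fun _ _ =>
        intervalIntegrable_sqWave_mul_sqWave (by fun_prop) (by fun_prop) _ _)
        (Nat.mul_pos hp.pos hq.pos)
    _ = ∫ x in (0 : ℝ)..1, sqWave (x + (q * a - p * b)) * sqWave x := by
      rw [← integral_comp_add_of_periodic hper' (p * b)]
      simp only [add_assoc, add_sub_cancel]

theorem integral_sqWave_add_int_div_two_mul_sqWave (k : ℤ) :
    ∫ x in (0 : ℝ)..1, sqWave (x + k / 2) * sqWave x = (-1) ^ k := by
  simp [sqWave_add_int_div_two, mul_assoc, sqWave_mul_self]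

theorem integral_sqWave_add_quarter_mul_sqWave :
    ∫ x in (0 : ℝ)..1, sqWave (x + 1 / 4) * sqWave x = 0 := by
  have hper : Function.Periodic (fun x => sqWave (x + 1 / 4) * sqWave x) 1 :=
    (periodic_sqWave.add_const _).mul periodic_sqWave
  have hanti (x : ℝ) : sqWave (x + 1 / 4 + 1 / 4) * sqWave (x + 1 / 4) =
      -(sqWave (x + 1 / 4) * sqWave x) := by
    rw [add_assoc, show (1 / 4 + 1 / 4 : ℝ) = 1 / 2 by norm_num, antiperiodic_sqWave]
    ring
  have hshift := integral_comp_add_of_periodic hper (1 / 4)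
  simp only [hanti, intervalIntegral.integral_neg] at hshift
  exact self_eq_neg.1 hshift.symm

theorem integral_sqWave_add_quarter_add_int_div_two_mul_sqWave (k : ℤ) :
    ∫ x in (0 : ℝ)..1, sqWave (x + (1 / 4 + k / 2)) * sqWave x = 0 := by
  simp only [← add_assoc, sqWave_add_int_div_two, mul_assoc, intervalIntegral.integral_const_mul,
    integral_sqWave_add_quarter_mul_sqWave, mul_zero]

/-! ### The sign correlation -/

theorem integral_sqWave_phase_mul_sqWave_phase_of_odd {p q D : ℕ} (hp : Odd p) (hq : Odd q)
    (hpq : p.Coprime q) (hodd : Odd (((p : ℤ) - q) * D / 2)) :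
    ∫ x in (0 : ℝ)..1, sqWave (p * x + (1 / 4 - D / 8)) * sqWave (q * x + (1 / 4 - D / 8)) = 0 := by
  have hcorr := mul_mul_integral_sqWave_mul_sqWave_of_odd hp hq hpq (1 / 4 - D / 8) (1 / 4 - D / 8)
  have hpq0 : (p * q : ℝ) ≠ 0 := mod_cast (Nat.mul_pos hp.pos hq.pos).ne'
  obtain ⟨e, he⟩ := ((Int.odd_coe_nat p).2 hp).sub_odd ((Int.odd_coe_nat q).2 hq)
  obtain ⟨h, hh⟩ := hodd
  rw [he, ← two_mul, mul_assoc, Int.mul_ediv_cancel_left _ two_ne_zero] at hh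
  have heR : (p : ℝ) - q = e + e := by exact_mod_cast he
  have hhR : (e : ℝ) * D = 2 * h + 1 := by exact_mod_cast hh
  have hshift : (q * (1 / 4 - D / 8) - p * (1 / 4 - D / 8) : ℝ) = 1 / 4 + (h - e : ℤ) / 2 := by
    push_cast
    linear_combination (-(1 / 4 : ℝ) + D / 8) * heR + hhR / 4
  rw [hshift, integral_sqWave_add_quarter_add_int_div_two_mul_sqWave] at hcorr
  exact (mul_eq_zero.1 hcorr).resolve_left hpq0

theorem integral_sqWave_phase_mul_sqWave_phase_of_even {p q D : ℕ} (hp : Odd p) (hq : Odd q)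
    (hpq : p.Coprime q) (heven : Even (((p : ℤ) - q) * D / 2)) :
    ∫ x in (0 : ℝ)..1, sqWave (p * x + (1 / 4 - D / 8)) * sqWave (q * x + (1 / 4 - D / 8)) =
      -(1 / (p * q) * (-1) ^ (((p : ℤ) + q) / 2 + ((p : ℤ) - q) * D / 4)) := by
  have hcorr := mul_mul_integral_sqWave_mul_sqWave_of_odd hp hq hpq (1 / 4 - D / 8) (1 / 4 - D / 8)
  have hpq0 : (p * q : ℝ) ≠ 0 := mod_cast (Nat.mul_pos hp.pos hq.pos).ne'
  have hq' : Odd (q : ℤ) := (Int.odd_coe_nat q).2 hq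
  obtain ⟨e, he⟩ := ((Int.odd_coe_nat p).2 hp).sub_odd hq'
  obtain ⟨h, hh⟩ := heven
  rw [he, ← two_mul, mul_assoc, Int.mul_ediv_cancel_left _ two_ne_zero] at hh
  have heR : (p : ℝ) - q = e + e := by exact_mod_cast he
  have hhR : (e : ℝ) * D = h + h := by exact_mod_cast hh
  have hshift : (q * (1 / 4 - D / 8) - p * (1 / 4 - D / 8) : ℝ) = (h - e : ℤ) / 2 := by
    push_cast
    linear_combination (-(1 / 4 : ℝ) + D / 8) * heR + hhR / 4
  have hexp : ((p : ℤ) + q) / 2 + ((p : ℤ) - q) * D / 4 = q + (h - e) + (e + e) := by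
    rw [he, show (e + e) * (D : ℤ) = 4 * h by linear_combination 2 * hh]
    omega
  rw [hshift, integral_sqWave_add_int_div_two_mul_sqWave] at hcorr
  rw [hexp, zpow_add₀ (by norm_num), zpow_add₀ (by norm_num), hq'.neg_one_zpow,
    (Even.add_self e).neg_one_zpow, ← hcorr, neg_one_mul, mul_one,
    mul_neg, neg_neg, ← mul_assoc, one_div_mul_cancel hpq0, one_mul]

theorem one_add_integral_sqWave_phase_mul_sqWave_phase_div_two {p q : ℕ} (hp : 0 < p) (hq : 0 < q)
    (hpq : p.Coprime q) (D : ℕ) :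
    (1 + ∫ x in (0 : ℝ)..1, sqWave (p * x + (1 / 4 - D / 8)) *
        sqWave (q * x + (1 / 4 - D / 8))) / 2 =
      if (Even (p : ℤ) ∨ Even (q : ℤ)) ∨
          (Odd (p : ℤ) ∧ Odd (q : ℤ) ∧ Odd (((p : ℤ) - q) * D / 2))
        then 1 / 2
        else 1 / 2 - 1 / (2 * (p : ℝ) * q) *
          (-1 : ℝ) ^ (((p : ℤ) + q) / 2 + ((p : ℤ) - q) * D / 4) := by
  simp only [Int.even_coe_nat, Int.odd_coe_nat]
  split_ifs with h
  · rcases h with (hpe | hqe) | ⟨hpo, hqo, hodd⟩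
    · rw [integral_sqWave_mul_sqWave_of_even hp hpe hpq, add_zero]
    · simp only [mul_comm (sqWave (p * _ + _)),
        integral_sqWave_mul_sqWave_of_even hq hqe hpq.symm, add_zero]
    · rw [integral_sqWave_phase_mul_sqWave_phase_of_odd hpo hqo hpq hodd, add_zero]
  · push Not at h
    obtain ⟨⟨hpo, hqo⟩, hnot⟩ := h
    rw [Nat.not_even_iff_odd] at hpo hqo
    rw [integral_sqWave_phase_mul_sqWave_phase_of_even hpo hqo hpq
      (Int.not_odd_iff_even.1 (hnot hpo hqo))]
    field_simp
    ring

theorem ae_sin_two_pi_mul_ne_zero {p : ℝ} (hp : p ≠ 0) (a : ℝ) :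
    ∀ᵐ x : ℝ, sin (2 * π * (p * x + a)) ≠ 0 := by
  have hzeros : (Set.range fun n : ℤ => ((n : ℝ) / 2 - a) / p).Countable := Set.countable_range _
  filter_upwards [hzeros.ae_notMem volume] with x hx hsin
  obtain ⟨n, hn⟩ := sin_eq_zero_iff.1 hsin
  refine hx ⟨n, ?_⟩
  have hn' : (n : ℝ) = 2 * (p * x + a) := mul_right_cancel₀ pi_ne_zero (by linear_combination hn)
  simp only [hn']
  field_simp
  ring

theorem cos_two_pi_mul_sub_eq_sin (y D : ℝ) :
    cos (2 * π * y - D * (π / 4)) = sin (2 * π * (y + (1 / 4 - D / 8))) := by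
  rw [← cos_pi_div_two_sub, ← cos_neg]
  ring_nf

theorem periodic_cos_two_pi_natCast_mul_sub (m : ℕ) (a : ℝ) :
    Function.Periodic (fun x => cos (2 * π * (m * x) - a)) 1 := fun x => by
  simp only [← cos_add_nat_mul_two_pi (2 * π * (m * x) - a) m]
  ring_nf

theorem integral_ite_sin_mul_sin_pos {p q : ℝ} (hp : p ≠ 0) (hq : q ≠ 0) (a b : ℝ) :
    (∫ x in (0 : ℝ)..1, if 0 < sin (2 * π * (p * x + a)) * sin (2 * π * (q * x + b))
        then (1 : ℝ) else 0) =
      (1 + ∫ x in (0 : ℝ)..1, sqWave (p * x + a) * sqWave (q * x + b)) / 2 := by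
  have hint := intervalIntegrable_sqWave_mul_sqWave (f := fun x => p * x + a)
    (g := fun x => q * x + b) (by fun_prop) (by fun_prop) 0 1
  calc _ = ∫ x in (0 : ℝ)..1, (1 + sqWave (p * x + a) * sqWave (q * x + b)) / 2 := by
        refine intervalIntegral.integral_congr_ae ?_
        filter_upwards [ae_sin_two_pi_mul_ne_zero hp a, ae_sin_two_pi_mul_ne_zero hq b]
          with x hx hy _
        rw [ite_pos_eq_one_add_sgn_div_two (mul_ne_zero hx hy), sgn_mul, sqWave_eq_sgn_sin hx,
          sqWave_eq_sgn_sin hy]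
    _ = _ := by
        rw [intervalIntegral.integral_div, intervalIntegral.integral_add intervalIntegrable_const
          hint]
        simp

theorem tendsto_density_sgn_lagFun_eq (D : ℕ) {r₁ r₂ : ℝ} (hr₁ : 0 < r₁) (hr₂ : 0 < r₂) {p q : ℕ}
    (hp : 0 < p) (hq : 0 < q) (hpq : (q : ℝ) * r₁ = p * r₂) :
    Tendsto (fun N : ℕ => (((Finset.range N).filter fun n =>
        sgn (LagFun (D + 1) n r₁) = sgn (LagFun (D + 1) n r₂)).card : ℝ) / N) atTop
      (nhds ((1 + ∫ x in (0 : ℝ)..1, sqWave (p * x + (1 / 4 - D / 8)) *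
        sqWave (q * x + (1 / 4 - D / 8))) / 2)) := by
  have hp0 : (p : ℝ) ≠ 0 := Nat.cast_ne_zero.2 hp.ne'
  have hq0 : (q : ℝ) ≠ 0 := Nat.cast_ne_zero.2 hq.ne'
  set c := √(2 * π) * r₁ / (p * π) with hc
  have hangle₁ (n : ℕ) : 2 * √n * (√(2 * π) * r₁) = 2 * π * (p * (c * √n)) := by
    rw [hc]
    field_simp
  have hangle₂ (n : ℕ) : 2 * √n * (√(2 * π) * r₂) = 2 * π * (q * (c * √n)) := by
    rw [hc]
    field_simp
    linear_combination -√(n : ℝ) * hpq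
  have h₁ := posAsymp_lagFun D hr₁
  have h₂ := posAsymp_lagFun D hr₂
  simp only [hangle₁, hangle₂] at h₁ h₂
  have hdens := PosAsymp.tendsto_density_sgn_eq
    (f := fun x => cos (2 * π * (p * x) - D * (π / 4)))
    (g := fun x => cos (2 * π * (q * x) - D * (π / 4))) h₁ h₂ (by fun_prop) (by fun_prop)
    (periodic_cos_two_pi_natCast_mul_sub p _) (periodic_cos_two_pi_natCast_mul_sub q _)
    (by
      filter_upwards [ae_sin_two_pi_mul_ne_zero hp0 (1 / 4 - D / 8),
        ae_sin_two_pi_mul_ne_zero hq0 (1 / 4 - D / 8)] with x hx hy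
      simpa only [cos_two_pi_mul_sub_eq_sin] using mul_ne_zero hx hy)
    (by positivity)
  simpa only [cos_two_pi_mul_sub_eq_sin, integral_ite_sin_mul_sin_pos hp0 hq0] using hdens

theorem laguerre_sign_correlation
    (d : ℕ) (hd : 1 ≤ d)
    (r₁ r₂ : ℝ) (hr₁ : 0 < r₁) (hr₂ : 0 < r₂)
    (p q : ℤ) (hp : 0 < p) (hq : 0 < q) (hcop : IsCoprime p q)
    (hpq : (q : ℝ) * r₁ = (p : ℝ) * r₂) :
    Tendsto (fun N : ℕ =>
      (((Finset.range N).filter (fun n =>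
        sgn (LagFun d n r₁) = sgn (LagFun d n r₂))).card : ℝ) / N)
      atTop (nhds
        (if (Even p ∨ Even q) ∨ (Odd p ∧ Odd q ∧ Odd ((p - q) * ((d : ℤ) - 1) / 2))
         then 1/2
         else 1/2 - (1 / (2 * (p : ℝ) * (q : ℝ))) *
           (-1 : ℝ) ^ ((p + q) / 2 + (p - q) * ((d : ℤ) - 1) / 4))) := by
  lift p to ℕ using hp.le
  lift q to ℕ using hq.le
  rw [Int.natCast_pos] at hp hq
  obtain ⟨D, rfl⟩ := Nat.exists_eq_add_of_le' hd
  have hlim := tendsto_density_sgn_lagFun_eq D hr₁ hr₂ hp hq hpq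
  rw [one_add_integral_sqWave_phase_mul_sqWave_phase_div_two hp hq
    (Nat.isCoprime_iff_coprime.1 hcop) D] at hlim
  simpa only [Nat.cast_add_one, add_sub_cancel_right, Int.cast_natCast] using hlim
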